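/- arXiv:math/0511515 — 7 statements merged into one kernel-verified Lean document; each statement's English description precedes it below -/
import Mathlib

section
/- The map Φ sending a plane tree t with p = #t vertices to the sequence (k_{u_0}(t), k_{u_1}(t), ..., k_{u_{p-1}}(t)) of numbers of children of its vertices listed in lexicographical order is a bijection from the set of all plane trees onto the set S of all finite sequences (m_1, ..., m_p) of nonnegative integers (p ≥ 1) satisfying m_1 + m_2 + ... + m_i ≥ i for every i ∈ {1, ..., p-1} and m_1 + m_2 + ... + m_p = p - 1. -/
/-- A plane tree (finite rooted ordered tree), encoded as a finite set of finite sequences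
of positive integers (vertices are words; `[]` is the root). -/
def IsPlaneTree (t : Finset (List ℕ)) : Prop :=
  [] ∈ t ∧
  (∀ u ∈ t, u ≠ [] → u.dropLast ∈ t) ∧
  (∀ u ∈ t, ∃ k : ℕ, ∀ j : ℕ, u ++ [j] ∈ t ↔ 1 ≤ j ∧ j ≤ k)

/-- `k_u(t)`, the number of children of the vertex `u` in `t`. -/
def childCount (t : Finset (List ℕ)) (u : List ℕ) : ℕ :=
  (t.filter fun v => v ≠ [] ∧ v.dropLast = u).card

/-- The vertices of `t` listed in lexicographical order. -/
def vertexList (t : Finset (List ℕ)) : List (List ℕ) :=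
  t.sort (· ≤ ·)

/-- The map `Φ` sending a tree to the sequence of numbers of children of its vertices,
listed in lexicographical order. -/
def PhiMap (t : Finset (List ℕ)) : List ℕ :=
  (vertexList t).map (childCount t)

/-- The set `S` of finite sequences `(m_1, …, m_p)` of nonnegative integers with `p ≥ 1`,
`m_1 + ⋯ + m_i ≥ i` for `1 ≤ i ≤ p - 1`, and `m_1 + ⋯ + m_p = p - 1`. -/
def IsLukasiewicz (m : List ℕ) : Prop :=
  1 ≤ m.length ∧
  (∀ i : ℕ, 1 ≤ i → i < m.length → i ≤ (m.take i).sum) ∧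
  m.sum = m.length - 1


lemma lt_append_single (u : List ℕ) (c : ℕ) : u < u ++ [c] := by
  induction u <;> simp_all

lemma dropLast_lt_self {u : List ℕ} (h : u ≠ []) : u.dropLast < u := by
  conv_rhs => rw [← List.dropLast_append_getLast h]
  exact lt_append_single _ _

lemma childCount_eq {t : Finset (List ℕ)} {u : List ℕ} {k : ℕ}
    (h : ∀ j : ℕ, u ++ [j] ∈ t ↔ 1 ≤ j ∧ j ≤ k) : childCount t u = k := by
  have : (t.filter fun v => v ≠ [] ∧ v.dropLast = u) =
      (Finset.Icc 1 k).image (fun j => u ++ [j]) := by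
    ext v
    simp only [Finset.mem_filter, Finset.mem_image, Finset.mem_Icc]
    constructor
    · rintro ⟨hv, hne, rfl⟩
      refine ⟨v.getLast hne, (h _).1 ?_, List.dropLast_append_getLast hne⟩
      rwa [List.dropLast_append_getLast hne]
    · rintro ⟨j, hj, rfl⟩
      exact ⟨(h j).2 hj, by simp, by simp⟩
  unfold childCount
  rw [this, Finset.card_image_of_injective]
  · simp
  · intro a b hab
    simpa using hab

lemma mem_child_iff {t : Finset (List ℕ)} (ht : IsPlaneTree t) {u : List ℕ} (hu : u ∈ t) (j : ℕ) :
    u ++ [j] ∈ t ↔ 1 ≤ j ∧ j ≤ childCount t u := by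
  obtain ⟨k, hk⟩ := ht.2.2 u hu
  rw [childCount_eq hk, hk]

lemma sum_childCount (t A : Finset (List ℕ)) :
    ∑ u ∈ A, childCount t u = (t.filter fun v => v ≠ [] ∧ v.dropLast ∈ A).card := by
  rw [Finset.card_eq_sum_card_fiberwise (f := List.dropLast) (t := A)]
  · refine Finset.sum_congr rfl fun u hu => ?_
    unfold childCount
    congr 1
    ext v
    simp only [Finset.mem_filter]
    constructor
    · rintro ⟨a, b, rfl⟩
      exact ⟨⟨a, b, hu⟩, rfl⟩
    · rintro ⟨⟨a, b, -⟩, c⟩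
      exact ⟨a, b, c⟩
  · intro v hv
    have hv' := Finset.mem_coe.1 hv
    simp only [Finset.mem_filter] at hv'
    exact hv'.2.2

lemma vl_sorted (t : Finset (List ℕ)) : (vertexList t).SortedLT := Finset.sortedLT_sort t

lemma vl_mem {t : Finset (List ℕ)} {u : List ℕ} : u ∈ vertexList t ↔ u ∈ t :=
  Finset.mem_sort _

lemma vl_length (t : Finset (List ℕ)) : (vertexList t).length = t.card :=
  Finset.length_sort _

lemma phi_mapsTo {t : Finset (List ℕ)} (ht : IsPlaneTree t) : IsLukasiewicz (PhiMap t) := by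
  have hlen : (PhiMap t).length = t.card := by simp [PhiMap, vl_length]
  have hs := vl_sorted t
  refine ⟨?_, ?_, ?_⟩
  · rw [hlen]
    exact Finset.card_pos.2 ⟨_, ht.1⟩
  · intro i hi1 hi
    rw [hlen] at hi
    have hil : i < (vertexList t).length := by rw [vl_length]; exact hi
    have hnd : ((vertexList t).take i).Nodup := hs.nodup.sublist (List.take_sublist _ _)
    have hnd' : ((vertexList t).take (i+1)).Nodup := hs.nodup.sublist (List.take_sublist _ _)
    rw [PhiMap, ← List.map_take, ← List.sum_toFinset _ hnd, sum_childCount]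
    have hsub : ((vertexList t).take (i+1)).toFinset.erase [] ⊆
        t.filter fun v => v ≠ [] ∧ v.dropLast ∈ ((vertexList t).take i).toFinset := by
      intro v hv
      rw [Finset.mem_erase, List.mem_toFinset] at hv
      obtain ⟨hne, hv⟩ := hv
      have hvt : v ∈ t := vl_mem.1 (List.mem_of_mem_take hv)
      rw [Finset.mem_filter, List.mem_toFinset]
      refine ⟨hvt, hne, ?_⟩
      obtain ⟨a, ha, rfl⟩ := List.mem_take_iff_getElem.1 hv
      obtain ⟨b, hb, hb'⟩ := List.getElem_of_mem (vl_mem.2 (ht.2.1 _ hvt hne))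
      have hlt := dropLast_lt_self hne
      rw [← hb'] at hlt ⊢
      rw [hs.getElem_lt_getElem_iff] at hlt
      refine List.mem_take_iff_getElem.2 ⟨b, ?_, rfl⟩
      omega
    have := Finset.card_le_card hsub
    have h2 := Finset.pred_card_le_card_erase (s := ((vertexList t).take (i+1)).toFinset)
      (a := ([] : List ℕ))
    rw [List.toFinset_card_of_nodup hnd', List.length_take] at h2
    omega
  · rw [hlen, PhiMap, ← List.sum_toFinset _ hs.nodup, sum_childCount,
      ← Finset.card_erase_of_mem ht.1]
    congr 1
    ext v
    simp only [Finset.mem_filter, Finset.mem_erase, List.mem_toFinset, vl_mem]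
    constructor
    · rintro ⟨a, b, -⟩
      exact ⟨b, a⟩
    · rintro ⟨a, b⟩
      exact ⟨b, a, ht.2.1 _ b a⟩

lemma inj_step {t t' : Finset (List ℕ)} (ht : IsPlaneTree t) (ht' : IsPlaneTree t')
    (h : PhiMap t = PhiMap t') (i : ℕ) (hi : i < (vertexList t).length)
    (hi' : i < (vertexList t').length)
    (IH : ∀ j (hj : j < i), (vertexList t)[j] = (vertexList t')[j]) :
    (vertexList t')[i] ≤ (vertexList t)[i] := by
  have hs := vl_sorted t
  have hs' := vl_sorted t'
  have hm : (vertexList t)[i] ∈ t' := by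
    have hvt : (vertexList t)[i] ∈ t := vl_mem.1 (List.getElem_mem hi)
    by_cases hne : (vertexList t)[i] = []
    · rw [hne]; exact ht'.1
    · have hp := ht.2.1 _ hvt hne
      obtain ⟨b, hb, hb'⟩ := List.getElem_of_mem (vl_mem.2 hp)
      have hlt := dropLast_lt_self hne
      rw [← hb', hs.getElem_lt_getElem_iff] at hlt
      have e := IH b hlt
      have hp' : (vertexList t')[b] ∈ t' := vl_mem.1 (List.getElem_mem _)
      have hc : childCount t (vertexList t)[b] = childCount t' (vertexList t')[b] := by
        have h1 : (PhiMap t)[b]? = (PhiMap t')[b]? := by rw [h]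
        have hb2 : b < (vertexList t').length := by omega
        simpa [PhiMap, hb, hb2] using h1
      have hd := List.dropLast_append_getLast hne
      rw [← hd] at hvt ⊢
      rw [mem_child_iff ht hp, ← hb', hc] at hvt
      rw [← hb', e, mem_child_iff ht' hp']
      exact hvt
  obtain ⟨k, hk, hk'⟩ := List.getElem_of_mem (vl_mem.2 hm)
  rw [← hk', hs'.getElem_le_getElem_iff]
  by_contra hlt
  push Not at hlt
  have := IH k hlt
  rw [hk'] at this
  have := (hs.nodup.getElem_inj_iff).1 this
  omega

lemma phi_inj {t t' : Finset (List ℕ)} (ht : IsPlaneTree t) (ht' : IsPlaneTree t')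
    (h : PhiMap t = PhiMap t') : t = t' := by
  have hl : (vertexList t).length = (vertexList t').length := by
    simpa [PhiMap] using congrArg List.length h
  have key : ∀ i (hi : i < (vertexList t).length) (hi' : i < (vertexList t').length),
      (vertexList t)[i] = (vertexList t')[i] := by
    intro i
    induction i using Nat.strong_induction_on with
    | _ i ih =>
      intro hi hi'
      apply le_antisymm
      · exact inj_step ht' ht h.symm i hi' hi
          (fun j hj => (ih j hj (by omega) (by omega)).symm)
      · exact inj_step ht ht' h i hi hi' (fun j hj => ih j hj (by omega) (by omega))
  have hv : vertexList t = vertexList t' := List.ext_getElem hl key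
  ext u
  rw [← vl_mem, hv, vl_mem]

/-- The minimum of a finite set of words (the empty word if the set is empty). -/
def minW (P : Finset (List ℕ)) : List ℕ := if h : P.Nonempty then P.min' h else []

/-- The first `k` children of `u`. -/
def kids (u : List ℕ) (k : ℕ) : Finset (List ℕ) := (Finset.Icc 1 k).image (fun j => u ++ [j])

/-- Pending vertices after `i` steps of the depth first exploration. -/
def pend (m : ℕ → ℕ) : ℕ → Finset (List ℕ)
  | 0 => {[]}
  | i + 1 => (pend m i).erase (minW (pend m i)) ∪ kids (minW (pend m i)) (m i)

lemma mem_kids {u v : List ℕ} {k : ℕ} : v ∈ kids u k ↔ ∃ c, 1 ≤ c ∧ c ≤ k ∧ v = u ++ [c] := by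
  simp only [kids, Finset.mem_image, Finset.mem_Icc]
  constructor
  · rintro ⟨c, h, rfl⟩
    exact ⟨c, h.1, h.2, rfl⟩
  · rintro ⟨c, h1, h2, rfl⟩
    exact ⟨c, ⟨h1, h2⟩, rfl⟩

lemma card_kids (u : List ℕ) (k : ℕ) : (kids u k).card = k := by
  rw [kids, Finset.card_image_of_injective]
  · simp
  · intro a b hab
    simpa using hab

lemma minW_mem {P : Finset (List ℕ)} (h : P.Nonempty) : minW P ∈ P := by
  rw [minW, dif_pos h]
  exact Finset.min'_mem _ _

lemma minW_le {P : Finset (List ℕ)} {v : List ℕ} (h : v ∈ P) : minW P ≤ v := by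
  rw [minW, dif_pos ⟨v, h⟩]
  exact Finset.min'_le _ _ h

lemma pend_inv (m : ℕ → ℕ) (p : ℕ)
    (hm : ∀ i, i < p → i ≤ ∑ j ∈ Finset.range i, m j) (i : ℕ) (hi : i ≤ p) :
    (∀ v ∈ pend m i, ∀ j < i, minW (pend m j) < v) ∧
    (∀ v, (v ∈ pend m i ∨ ∃ j < i, v = minW (pend m j)) ↔
      (v = [] ∨ ∃ j < i, ∃ c, 1 ≤ c ∧ c ≤ m j ∧ v = minW (pend m j) ++ [c])) ∧
    (pend m i).card + i = 1 + ∑ j ∈ Finset.range i, m j := by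
  induction i with
  | zero => simp [pend]
  | succ i ih =>
    obtain ⟨ha, hb, hc⟩ := ih (by omega)
    have hne : (pend m i).Nonempty := by
      rw [← Finset.card_pos]
      have := hm i (by omega)
      omega
    have hmem := minW_mem hne
    refine ⟨?_, ?_, ?_⟩
    · intro v hv j hj
      rw [pend, Finset.mem_union, Finset.mem_erase, mem_kids] at hv
      rcases hv with ⟨h1, h2⟩ | ⟨c, _, _, rfl⟩
      · rcases Nat.lt_succ_iff_lt_or_eq.1 hj with h | rfl
        · exact ha v h2 j h
        · exact lt_of_le_of_ne (minW_le h2) (Ne.symm h1)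
      · rcases Nat.lt_succ_iff_lt_or_eq.1 hj with h | rfl
        · exact (ha _ hmem j h).trans (lt_append_single _ _)
        · exact lt_append_single _ _
    · intro v
      have hb := hb v
      simp only [Nat.exists_lt_succ_right]
      rw [← or_assoc, ← or_assoc, ← hb, pend, Finset.mem_union, Finset.mem_erase, mem_kids]
      by_cases hv : v = minW (pend m i)
      · simp [hv, hmem]
      · simp only [hv, ne_eq, not_false_eq_true, true_and, or_false]
        exact or_right_comm
    · have hd : Disjoint ((pend m i).erase (minW (pend m i))) (kids (minW (pend m i)) (m i)) := by
        rw [Finset.disjoint_left]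
        intro v hv hk
        obtain ⟨c, _, _, rfl⟩ := mem_kids.1 hk
        rcases (hb _).1 (Or.inl (Finset.mem_of_mem_erase hv)) with h | ⟨j, hj, c', _, _, h⟩
        · simp at h
        · have h3 := ha _ hmem j hj
          have h4 := congrArg List.dropLast h
          simp only [List.dropLast_concat] at h4
          rw [h4] at h3
          exact lt_irrefl _ h3
      rw [pend, Finset.card_union_of_disjoint hd, card_kids, Finset.card_erase_of_mem hmem,
        Finset.sum_range_succ]
      have := Finset.card_pos.2 hne
      omega

lemma sum_take_getD (m : List ℕ) (i : ℕ) (hi : i ≤ m.length) :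
    ∑ j ∈ Finset.range i, m.getD j 0 = (m.take i).sum := by
  induction i with
  | zero => simp
  | succ i ih =>
    have : i < m.length := by omega
    rw [Finset.sum_range_succ, ih (by omega), List.sum_take_succ m i this]
    simp [this]

lemma phi_surj {m : List ℕ} (hm : IsLukasiewicz m) : ∃ t, IsPlaneTree t ∧ PhiMap t = m := by
  obtain ⟨h1, h2, h3⟩ := hm
  set f : ℕ → ℕ := fun j => m.getD j 0 with hf
  set p := m.length with hp
  have hsum : ∀ i, i < p → i ≤ ∑ j ∈ Finset.range i, f j := by
    intro i hi
    rcases Nat.eq_zero_or_pos i with rfl | h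
    · simp
    · rw [sum_take_getD m i (by omega)]
      exact h2 i h hi
  have inv := pend_inv f p hsum
  set w : ℕ → List ℕ := fun i => minW (pend f i) with hw
  have hempty : pend f p = ∅ := by
    have := (inv p le_rfl).2.2
    rw [sum_take_getD m p le_rfl, List.take_of_length_le hp.ge, h3] at this
    rw [← Finset.card_eq_zero]
    omega
  have hne : ∀ i, i < p → (pend f i).Nonempty := by
    intro i hi
    rw [← Finset.card_pos]
    have := hsum i hi
    have := (inv i hi.le).2.2
    omega
  have hlt : ∀ i j, i < j → j < p → w i < w j := fun i j hij hj =>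
    (inv j hj.le).1 _ (minW_mem (hne j hj)) i hij
  have hinj : ∀ i j, i < p → j < p → w i = w j → i = j := by
    intro i j hi hj h
    rcases lt_trichotomy i j with h' | h' | h'
    · exact absurd h (hlt i j h' hj).ne
    · exact h'
    · exact absurd h.symm (hlt j i h' hi).ne
  set t := (Finset.range p).image w with ht
  have hmem : ∀ v, v ∈ t ↔ v = [] ∨ ∃ j < p, ∃ c, 1 ≤ c ∧ c ≤ f j ∧ v = w j ++ [c] := by
    intro v
    rw [← (inv p le_rfl).2.1 v, hempty]
    simp [ht, hw, eq_comm]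
  have hwt : ∀ j, j < p → w j ∈ t := fun j hj =>
    Finset.mem_image_of_mem _ (Finset.mem_range.2 hj)
  have hchild : ∀ i, i < p → ∀ j, w i ++ [j] ∈ t ↔ 1 ≤ j ∧ j ≤ f i := by
    intro i hi j
    rw [hmem]
    constructor
    · rintro (h | ⟨k, hk, c, hc1, hc2, h⟩)
      · simp at h
      · obtain ⟨e1, e2⟩ := List.append_inj' h rfl
        obtain rfl := hinj _ _ hi hk e1
        simp only [List.cons.injEq, and_true] at e2
        subst e2
        exact ⟨hc1, hc2⟩
    · rintro ⟨a, b⟩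
      exact Or.inr ⟨i, hi, j, a, b, rfl⟩
  refine ⟨t, ⟨(hmem _).2 (Or.inl rfl), ?_, ?_⟩, ?_⟩
  · intro u hu hne'
    rcases (hmem u).1 hu with h | ⟨j, hj, c, _, _, rfl⟩
    · exact absurd h hne'
    · rw [List.dropLast_concat]
      exact hwt j hj
  · intro u hu
    obtain ⟨i, hi, rfl⟩ := Finset.mem_image.1 hu
    exact ⟨f i, hchild i (Finset.mem_range.1 hi)⟩
  · have hv : vertexList t = (List.range p).map w := by
      apply (vl_sorted t).eq_of_mem_iff
      · apply List.Pairwise.sortedLT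
        rw [List.pairwise_map]
        refine (List.pairwise_lt_range (n := p)).imp_of_mem ?_
        intro a b _ hb hab
        exact hlt a b hab (List.mem_range.1 hb)
      · intro v
        rw [vl_mem, ht]
        simp
    rw [PhiMap, hv]
    apply List.ext_getElem
    · simp [hp]
    · intro i hi hi'
      simp only [List.getElem_map, List.getElem_range]
      rw [childCount_eq (hchild i hi')]
      simp [hf, hi']

/-- Proposition 1.1: `Φ` is a bijection from the set of all plane trees onto `S`. -/
theorem stmt0 : Set.BijOn PhiMap {t | IsPlaneTree t} {m | IsLukasiewicz m} := by
  refine ⟨fun t ht => phi_mapsTo ht, fun t ht t' ht' h => phi_inj ht ht' h, fun m hm => ?_⟩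
  obtain ⟨t, ht, h⟩ := phi_surj hm
  exact ⟨t, ht, h⟩
end

section
/- Let t be a plane tree with p = #t vertices, let h_t(n) = |u_n| (the length of the sequence u_n) be its height function, and let x_0 = 0, x_n = Σ_{i=1}^n (k_{u_{i-1}}(t) - 1) for 1 ≤ n ≤ p be its Lukasiewicz path. Then for every n ∈ {0, 1, ..., p - 1}, h_t(n) = #{ j ∈ {0, 1, ..., n-1} : x_j = min_{j ≤ ℓ ≤ n} x_ℓ }. -/
theorem pt_cons_le (a b : ℕ) (u v : List ℕ) : a :: u ≤ b :: v ↔ a < b ∨ a = b ∧ u ≤ v := by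
  rw [← not_lt, ← not_lt, List.cons_lt_cons_iff, not_or, not_and]
  constructor
  · rintro ⟨h1, h2⟩
    rcases lt_trichotomy a b with h | h | h
    · exact Or.inl h
    · exact Or.inr ⟨h, h2 h.symm⟩
    · exact absurd h h1
  · rintro (h | ⟨h, h'⟩)
    · exact ⟨by omega, by omega⟩
    · exact ⟨by omega, fun _ => h'⟩

theorem pt_prefix_le (u v : List ℕ) (h : u <+: v) : u ≤ v := by
  induction u generalizing v with
  | nil => exact not_lt.mp (List.not_lt_nil v)
  | cons c u ih =>
    cases v with
    | nil => simp at h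
    | cons d v =>
      rw [List.cons_prefix_cons] at h
      rw [pt_cons_le]
      exact Or.inr ⟨h.1, ih _ h.2⟩

theorem pt_convex (u w v : List ℕ) (h : u <+: v) (h1 : u ≤ w) (h2 : w ≤ v) : u <+: w := by
  induction u generalizing v w with
  | nil => exact List.nil_prefix
  | cons c u ih =>
    cases v with
    | nil => simp at h
    | cons d v =>
      cases w with
      | nil => exact absurd h1 (not_le.mpr (List.nil_lt_cons c u))
      | cons e w =>
        rw [List.cons_prefix_cons] at h ⊢
        rw [pt_cons_le] at h1 h2
        obtain ⟨rfl, h⟩ := h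
        rcases h1 with h1 | ⟨rfl, h1⟩
        · rcases h2 with h2 | ⟨rfl, h2⟩ <;> omega
        · rcases h2 with h2 | ⟨_, h2⟩
          · omega
          · exact ⟨rfl, ih _ _ h h1 h2⟩

theorem pt_dropLast_lt (v : List ℕ) (h : v ≠ []) : v.dropLast < v := by
  refine lt_of_le_of_ne (pt_prefix_le _ _ (List.dropLast_prefix v)) ?_
  intro he
  have := congrArg List.length he
  have h2 := List.length_pos_of_ne_nil h
  simp at this
  omega

theorem pt_prefix_dropLast (u v : List ℕ) (h : u <+: v) (hne : v ≠ u) : u <+: v.dropLast := by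
  rcases List.eq_nil_or_concat v with rfl | ⟨w, a, rfl⟩
  · simpa using h
  · rw [List.concat_eq_append] at *
    rw [List.prefix_concat_iff] at h
    simp
    rcases h with h | h
    · exact absurd h.symm hne
    · exact h

theorem pt_prefix_mem (t : Finset (List ℕ)) (ht : IsPlaneTree t) (v : List ℕ) (hv : v ∈ t)
    (u : List ℕ) (h : u <+: v) : u ∈ t := by
  induction v using List.reverseRecOn with
  | nil => rw [List.prefix_nil] at h; rwa [h]
  | append_singleton w a ih =>
    rw [List.prefix_concat_iff] at h
    rcases h with rfl | h
    · exact hv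
    · have := ht.2.1 _ hv (by simp)
      simp at this
      exact ih this h

/-- Vertices at or after `a` whose parent (if any) is strictly before `a`. -/
def ptS (t : Finset (List ℕ)) (a : List ℕ) : Finset (List ℕ) :=
  t.filter fun v => a ≤ v ∧ (v = [] ∨ v.dropLast < a)

theorem mem_ptS (t : Finset (List ℕ)) (a v : List ℕ) :
    v ∈ ptS t a ↔ v ∈ t ∧ a ≤ v ∧ (v = [] ∨ v.dropLast < a) := by
  simp [ptS]

theorem self_mem_ptS (t : Finset (List ℕ)) (a : List ℕ) (ha : a ∈ t) : a ∈ ptS t a := by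
  rw [mem_ptS]
  refine ⟨ha, le_rfl, ?_⟩
  by_cases h : a = []
  · exact Or.inl h
  · exact Or.inr (pt_dropLast_lt a h)

theorem ptS_step (t : Finset (List ℕ)) (ht : IsPlaneTree t) (a b : List ℕ) (ha : a ∈ t)
    (hab : a < b) (hc : ∀ v ∈ t, v < b ↔ v ≤ a) :
    ((ptS t b).card : ℤ) = (ptS t a).card + ((childCount t a : ℤ) - 1) := by
  have hS : ptS t b = (ptS t a).erase a ∪ (t.filter fun v => v ≠ [] ∧ v.dropLast = a) := by
    ext v
    simp only [Finset.mem_union, Finset.mem_erase, mem_ptS, Finset.mem_filter]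
    by_cases hv : v ∈ t
    swap
    · simp [hv]
    by_cases h0 : v = []
    · subst h0
      have h3 : ¬ (b ≤ []) := not_le.mpr (lt_of_le_of_lt (pt_prefix_le [] a List.nil_prefix) hab)
      have h4 : a ≤ [] → [] = a := fun h => le_antisymm (pt_prefix_le [] a List.nil_prefix) h
      simp [h3]
      intro h5 _
      exact lt_of_le_of_ne (pt_prefix_le [] a List.nil_prefix) (Ne.symm h5)
    · have hd := hc _ (ht.2.1 v hv h0)
      have hvb := hc v hv
      have hlt := pt_dropLast_lt v h0
      have hvb' : b ≤ v ↔ a < v := by rw [← not_lt, hvb, not_le]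
      simp only [hv, h0, hd, hvb', true_and, false_or, ne_eq, not_false_eq_true]
      constructor
      · rintro ⟨h1, h2⟩
        rcases h2.lt_or_eq with h2 | h2
        · exact Or.inl ⟨h1.ne', h1.le, h2⟩
        · exact Or.inr h2
      · rintro (⟨h1, h2, h3⟩ | h)
        · exact ⟨lt_of_le_of_ne h2 (Ne.symm h1), h3.le⟩
        · exact ⟨h ▸ hlt, h.le⟩
  have hdis : Disjoint ((ptS t a).erase a) (t.filter fun v => v ≠ [] ∧ v.dropLast = a) := by
    rw [Finset.disjoint_left]
    intro v h1 h2
    simp only [Finset.mem_erase, mem_ptS, Finset.mem_filter] at h1 h2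
    obtain ⟨_, _, _, h | h⟩ := h1
    · exact h2.2.1 h
    · exact h.ne h2.2.2
  have hm := self_mem_ptS t a ha
  have hpos := Finset.card_pos.mpr ⟨a, hm⟩
  rw [hS, Finset.card_union_of_disjoint hdis, Finset.card_erase_of_mem hm]
  unfold childCount
  omega

theorem ptS_le (t : Finset (List ℕ)) (a c : List ℕ) (ha : a ∈ t) (hc : c ∈ t)
    (h : a <+: c) : (ptS t a).card ≤ (ptS t c).card := by
  by_cases hac : c = a
  · rw [hac]
  have h1 : (insert c ((ptS t a).erase a)) ⊆ ptS t c := by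
    intro v hv
    rw [Finset.mem_insert] at hv
    rcases hv with rfl | hv
    · exact self_mem_ptS t _ hc
    · rw [Finset.mem_erase, mem_ptS] at hv
      obtain ⟨hva, hvt, hav, h0⟩ := hv
      have hnp : ¬ a <+: v := by
        intro hp
        have := pt_prefix_le _ _ (pt_prefix_dropLast _ _ hp hva)
        rcases h0 with rfl | h0
        · rw [List.prefix_nil] at hp; exact hva hp.symm
        · exact absurd h0 (not_lt.mpr this)
      rw [mem_ptS]
      refine ⟨hvt, ?_, h0.imp_right fun h0 => lt_of_lt_of_le h0 (pt_prefix_le _ _ h)⟩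
      by_contra hlt
      exact hnp (pt_convex a v c h hav (not_le.mp hlt).le)
  have h2 : c ∉ (ptS t a).erase a := by
    rw [Finset.mem_erase, mem_ptS]
    rintro ⟨_, _, _, h0⟩
    have := pt_prefix_le _ _ (pt_prefix_dropLast _ _ h hac)
    rcases h0 with rfl | h0
    · rw [List.prefix_nil] at h; exact hac h.symm
    · exact absurd h0 (not_lt.mpr this)
  have h3 := Finset.card_le_card h1
  rw [Finset.card_insert_of_notMem h2, Finset.card_erase_of_mem (self_mem_ptS t a ha)] at h3
  omega

theorem ptS_lt (t : Finset (List ℕ)) (ht : IsPlaneTree t) (a c : List ℕ) (ha : a ∈ t)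
    (hac : a < c) (h : ¬ a <+: c) (hmin : ∀ w ∈ t, a ≤ w → w < c → a <+: w) :
    (ptS t c).card < (ptS t a).card := by
  apply Finset.card_lt_card
  rw [Finset.ssubset_iff_of_subset]
  · refine ⟨a, self_mem_ptS t a ha, ?_⟩
    rw [mem_ptS]
    rintro ⟨_, h1, _⟩
    exact absurd hac (not_lt.mpr h1)
  · intro v hv
    rw [mem_ptS] at hv ⊢
    obtain ⟨hvt, hcv, h0⟩ := hv
    refine ⟨hvt, hac.le.trans hcv, ?_⟩
    by_cases hv0 : v = []
    · exact Or.inl hv0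
    refine Or.inr ?_
    by_contra hlt
    have hp := hmin _ (ht.2.1 v hvt hv0) (not_lt.mp hlt) (h0.resolve_left hv0)
    exact h (pt_convex a c v (hp.trans (List.dropLast_prefix v)) hac.le hcv)

/-- Proposition 1.2: the height function `h_t(n) = |u_n|` of a plane tree `t` is related to its
Lukasiewicz path `x` (with `x_n = ∑_{i=1}^n (k_{u_{i-1}}(t) - 1)`) by
`h_t(n) = #{j ∈ {0,…,n-1} : x_j = min_{j ≤ ℓ ≤ n} x_ℓ}` for every `n ∈ {0,…,#t-1}`. -/
theorem stmt1 (t : Finset (List ℕ)) (ht : IsPlaneTree t)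
    (x : ℕ → ℤ)
    (hx : ∀ n : ℕ, x n =
      ∑ i ∈ Finset.range n, ((childCount t ((vertexList t).getD i []) : ℤ) - 1))
    (n : ℕ) (hn : n < t.card) :
    ((vertexList t).getD n []).length =
      ((Finset.range n).filter fun j => ∀ ℓ ∈ Finset.Icc j n, x j ≤ x ℓ).card := by
  have hlen : (vertexList t).length = t.card := by simp [vertexList]
  obtain ⟨f, hf⟩ : ∃ f : ℕ → List ℕ, ∀ i, (vertexList t).getD i [] = f i := ⟨_, fun _ => rfl⟩
  simp only [hf] at hx ⊢
  have hfe : ∀ i, (hi : i < t.card) → f i = (vertexList t)[i]'(by omega) := by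
    intro i hi
    rw [← hf, List.getD_eq_getElem]
  have hmem : ∀ i < t.card, f i ∈ t := by
    intro i hi
    rw [hfe i hi]
    have := List.getElem_mem (l := vertexList t) (n := i) (by omega)
    exact (Finset.mem_sort (· ≤ ·)).mp this
  have hmono : ∀ i j, i < j → j < t.card → f i < f j := by
    intro i j hij hj
    rw [hfe i (by omega), hfe j hj]
    have h := (Finset.sortedLT_sort t).pairwise
    exact List.pairwise_iff_getElem.mp h i j _ _ hij
  have hsurj : ∀ v ∈ t, ∃ i < t.card, f i = v := by
    intro v hv
    have : v ∈ vertexList t := by simpa [vertexList] using hv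
    obtain ⟨i, hi, h⟩ := List.getElem_of_mem this
    exact ⟨i, by omega, by rw [hfe i (by omega), h]⟩
  have hltiff : ∀ i j, i < t.card → j < t.card → (f i < f j ↔ i < j) := by
    intro i j hi hj
    refine ⟨fun h => ?_, fun h => hmono i j h hj⟩
    by_contra hc
    rcases (not_lt.mp hc).lt_or_eq with h' | h'
    · exact lt_asymm h (hmono _ _ h' hi)
    · subst h'; exact lt_irrefl _ h
  have hleiff : ∀ i j, i < t.card → j < t.card → (f i ≤ f j ↔ i ≤ j) := by
    intro i j hi hj
    rw [← not_lt, hltiff j i hj hi, not_lt]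
  have hxS : ∀ m < t.card, x m = (ptS t (f m)).card - 1 := by
    intro m
    induction m with
    | zero =>
      intro h
      have h0 : f 0 = [] := by
        obtain ⟨i, hi, h'⟩ := hsurj [] ht.1
        have := (hleiff 0 i h hi).mpr (Nat.zero_le _)
        rw [h'] at this
        exact le_antisymm this (pt_prefix_le _ _ List.nil_prefix)
      have : ptS t [] = {[]} := by
        ext v
        rw [mem_ptS, Finset.mem_singleton]
        constructor
        · rintro ⟨_, _, h | h⟩
          · exact h
          · exact absurd h (List.not_lt_nil _)
        · rintro rfl
          exact ⟨ht.1, le_rfl, Or.inl rfl⟩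
      rw [h0, this, hx]
      simp
    | succ m ih =>
      intro h
      have hm := ih (by omega)
      have hs := ptS_step t ht (f m) (f (m+1)) (hmem m (by omega)) (hmono m _ (by omega) h) (by
        intro v hv
        obtain ⟨i, hi, rfl⟩ := hsurj v hv
        rw [hltiff _ _ hi h, hleiff _ _ hi (by omega)]
        omega)
      have : x (m+1) = x m + ((childCount t (f m) : ℤ) - 1) := by
        rw [hx, hx, Finset.sum_range_succ]
      omega
  have hkey : ∀ j < n, ((∀ ℓ ∈ Finset.Icc j n, x j ≤ x ℓ) ↔ f j <+: f n) := by
    intro j hj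
    constructor
    · intro H
      by_contra hnp
      have hex : ∃ l, j < l ∧ l ≤ n ∧ ¬ f j <+: f l := ⟨n, hj, le_rfl, hnp⟩
      classical
      obtain ⟨h1, h2, h3⟩ := Nat.find_spec hex
      have hmin := fun m => Nat.find_min hex (m := m)
      generalize Nat.find hex = l at *
      have := ptS_lt t ht (f j) (f l) (hmem j (by omega)) (hmono j l h1 (by omega)) h3 (by
        intro w hw hjw hwl
        obtain ⟨i, hi, rfl⟩ := hsurj w hw
        rw [hleiff _ _ (by omega) hi] at hjw
        rw [hltiff _ _ hi (by omega)] at hwl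
        rcases hjw.lt_or_eq with h | h
        · by_contra hc
          exact hmin i hwl ⟨h, by omega, hc⟩
        · rw [h])
      have h4 := H l (Finset.mem_Icc.mpr ⟨h1.le, h2⟩)
      rw [hxS j (by omega), hxS l (by omega)] at h4
      omega
    · intro hp l hl
      rw [Finset.mem_Icc] at hl
      have hpl := pt_convex (f j) (f l) (f n) hp ((hleiff _ _ (by omega) (by omega)).mpr hl.1)
        ((hleiff _ _ (by omega) (by omega)).mpr hl.2)
      have := ptS_le t (f j) (f l) (hmem j (by omega)) (hmem l (by omega)) hpl
      rw [hxS j (by omega), hxS l (by omega)]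
      omega
  rw [← Finset.card_range (f n).length]
  symm
  apply Finset.card_bij (fun j _ => (f j).length)
  · intro j hj
    rw [Finset.mem_filter, Finset.mem_range] at hj
    have hp := (hkey j hj.1).mp hj.2
    rw [Finset.mem_range]
    refine lt_of_le_of_ne hp.length_le fun he => ?_
    have := hmono j n hj.1 hn
    rw [hp.eq_of_length he] at this
    exact lt_irrefl _ this
  · intro i hi j hj hij
    rw [Finset.mem_filter, Finset.mem_range] at hi hj
    have hpi := (hkey i hi.1).mp hi.2
    have hpj := (hkey j hj.1).mp hj.2
    have he : f i = f j :=
      (List.prefix_of_prefix_length_le hpi hpj (le_of_eq hij)).eq_of_length hij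
    have h1 := (hleiff i j (by omega) (by omega)).mp he.le
    have h2 := (hleiff j i (by omega) (by omega)).mp he.ge
    omega
  · intro b hb
    rw [Finset.mem_range] at hb
    have hp : (f n).take b <+: f n := List.take_prefix _ _
    obtain ⟨j, hj, he⟩ := hsurj _ (pt_prefix_mem t ht (f n) (hmem n hn) _ hp)
    have hl : (f j).length = b := by rw [he, List.length_take]; omega
    rw [← he] at hp
    have hjn : j < n := by
      refine lt_of_le_of_ne ((hleiff j n hj hn).mp (pt_prefix_le _ _ hp)) ?_
      rintro rfl
      omega
    exact ⟨j, by rw [Finset.mem_filter, Finset.mem_range]; exact ⟨hjn, (hkey j hjn).mpr hp⟩, hl⟩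
end

section
/- The quotient metric space (T_g, d_g) is a compact real tree: (i) for every a, b ∈ T_g there is a unique isometric map f_{a,b} from the interval [0, d_g(a,b)] into T_g such that f_{a,b}(0) = a and f_{a,b}(d_g(a,b)) = b; (ii) for every continuous injective map q : [0,1] → T_g with q(0) = a and q(1) = b, one has q([0,1]) = f_{a,b}([0, d_g(a,b)]). -/
/-- the four point condition -/
def FourPt (T : Type) [MetricSpace T] : Prop :=
  ∀ x y z w : T, dist x y + dist z w ≤ max (dist x z + dist y w) (dist x w + dist y z)

theorem connected_mem {T : Type} [MetricSpace T] (h4 : FourPt T) (C : Set T)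
    (hC : IsPreconnected C) (a b x : T) (ha : a ∈ C) (hb : b ∈ C)
    (hx : dist a x + dist x b = dist a b) : x ∈ C := by
  by_contra hxC
  have hne : ∀ y ∈ C, 0 < dist x y := fun y hy => dist_pos.2 (fun h => hxC (h ▸ hy))
  have hU : IsOpen {y : T | dist y a < dist x y + dist x a} :=
    isOpen_lt (by fun_prop) (by fun_prop)
  have hV : IsOpen {y : T | 0 < dist x y ∧ dist x y + dist x a ≤ dist y a} := by
    rw [Metric.isOpen_iff]
    rintro y ⟨hy0, hy⟩
    refine ⟨dist x y, hy0, ?_⟩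
    intro z hz
    rw [Metric.mem_ball] at hz
    have e1 := dist_comm z y
    have e2 := dist_comm x y
    have e3 := dist_comm x z
    have e4 := dist_comm y a
    have e5 := dist_comm z a
    have t1 := dist_triangle x z y
    refine ⟨by linarith, ?_⟩
    have := h4 y a x z
    rcases le_max_iff.1 this with h | h <;> linarith [dist_comm a x, dist_triangle y x a]
  obtain ⟨y, -, hy1, hy2⟩ := hC _ _ hU hV (fun y hy => by
      rcases lt_or_ge (dist y a) (dist x y + dist x a) with h | h
      · exact Or.inl h
      · exact Or.inr ⟨hne y hy, h⟩)
    ⟨a, ha, by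
      have := hne a ha
      simp only [Set.mem_setOf_eq, dist_self]; linarith⟩
    ⟨b, hb, hne b hb, by linarith [dist_comm a x, dist_comm a b]⟩
  have : dist y a < dist x y + dist x a := hy1
  linarith [hy2.2]

theorem tree_main {T : Type} [MetricSpace T] (h4 : FourPt T)
    (hseg : ∀ a b : T, ∀ r ∈ Set.Icc (0 : ℝ) (dist a b),
      ∃ x, dist a x = r ∧ dist x b = dist a b - r) (a b : T) :
      (∃! f : Set.Icc (0 : ℝ) (dist a b) → T,
        Isometry f ∧ f ⟨0, le_refl 0, dist_nonneg⟩ = a ∧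
          f ⟨dist a b, dist_nonneg, le_refl _⟩ = b) ∧
      (∀ f : Set.Icc (0 : ℝ) (dist a b) → T,
        Isometry f → f ⟨0, le_refl 0, dist_nonneg⟩ = a →
          f ⟨dist a b, dist_nonneg, le_refl _⟩ = b →
        ∀ q : Set.Icc (0 : ℝ) 1 → T, Continuous q → Function.Injective q →
          q ⟨0, le_refl 0, zero_le_one⟩ = a → q ⟨1, zero_le_one, le_refl 1⟩ = b →
          Set.range q = Set.range f) := by
  -- uniqueness of points on the segment
  have huniq : ∀ x y : T, dist a x + dist x b = dist a b → dist a y + dist y b = dist a b →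
      dist a x = dist a y → x = y := by
    intro x y hx hy hxy
    have := h4 a b x y
    have h0 : dist x y ≤ 0 := by
      rcases le_max_iff.1 this with h | h <;> linarith [dist_comm b y, dist_comm b x]
    exact dist_le_zero.1 h0
  have hf : ∀ f : Set.Icc (0 : ℝ) (dist a b) → T,
        Isometry f → f ⟨0, le_refl 0, dist_nonneg⟩ = a →
          f ⟨dist a b, dist_nonneg, le_refl _⟩ = b →
        ∀ r, dist a (f r) = r ∧ dist (f r) b = dist a b - r := by
    intro f hfi h0 h1 r
    constructor
    · conv_lhs => rw [← h0]
      rw [hfi.dist_eq, Subtype.dist_eq, Real.dist_eq, zero_sub, abs_neg, abs_of_nonneg r.2.1]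
    · have : dist (f r) b = dist (f r) (f ⟨dist a b, dist_nonneg, le_refl _⟩) := by rw [h1]
      rw [this, hfi.dist_eq, Subtype.dist_eq, Real.dist_eq, abs_sub_comm,
        abs_of_nonneg (sub_nonneg.2 r.2.2)]
  refine ⟨?_, ?_⟩
  · choose F hF1 hF2 using hseg a b
    refine ⟨fun r => F r r.2, ⟨?_, ?_, ?_⟩, ?_⟩
    · have key : ∀ r s : Set.Icc (0 : ℝ) (dist a b), r ≤ s →
          dist (F r r.2) (F s s.2) = dist r s := by
        intro r s hrs
        have hrs' : (r : ℝ) ≤ s := hrs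
        rw [Subtype.dist_eq, Real.dist_eq, abs_sub_comm, abs_of_nonneg (sub_nonneg.2 hrs')]
        have a1 := hF1 r r.2
        have a2 := hF2 r r.2
        have a3 := hF1 s s.2
        have a4 := hF2 s s.2
        generalize F r r.2 = x at *
        generalize F s s.2 = y at *
        apply le_antisymm
        · rcases le_max_iff.1 (h4 a b x y) with h | h <;>
            linarith [dist_comm b y, dist_comm b x]
        · linarith [dist_triangle a x y]
      refine Isometry.of_dist_eq fun r s => ?_
      rcases le_total r s with h | h
      · exact key r s h
      · rw [dist_comm, key s r h, dist_comm]
    · exact (dist_eq_zero.1 (hF1 0 ⟨le_refl 0, dist_nonneg⟩)).symm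
    · exact dist_eq_zero.1 (by rw [hF2]; simp)
    · rintro f ⟨hfi, h0, h1⟩
      funext r
      obtain ⟨e1, e2⟩ := hf f hfi h0 h1 r
      apply huniq
      · rw [e1, e2]; ring
      · rw [hF1, hF2]; ring
      · rw [e1, hF1]
  · intro f hfi h0 h1 q hq hqi q0 q1
    have hrf : ∀ x, x ∈ Set.range f ↔ dist a x + dist x b = dist a b := by
      intro x
      constructor
      · rintro ⟨r, rfl⟩
        obtain ⟨e1, e2⟩ := hf f hfi h0 h1 r
        rw [e1, e2]; ring
      · intro hx
        let r : Set.Icc (0 : ℝ) (dist a b) :=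
          ⟨dist a x, dist_nonneg, by linarith [dist_nonneg (x := x) (y := b)]⟩
        refine ⟨r, ?_⟩
        obtain ⟨e1, e2⟩ := hf f hfi h0 h1 r
        apply huniq _ _ _ hx
        · rw [e1]
        · rw [e1, e2]; ring
    apply Set.Subset.antisymm
    · rintro _ ⟨t, rfl⟩
      rw [hrf]
      set y := q t with hy
      obtain ⟨z, hz1, hz2⟩ := hseg a b ((dist a b + dist a y - dist b y) / 2)
        ⟨by linarith [dist_triangle b a y, dist_comm a b], by linarith [dist_triangle a b y]⟩
      have hzy : dist z y ≤ (dist a y + dist b y - dist a b) / 2 := by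
        rcases le_max_iff.1 (h4 a b z y) with h | h <;>
            linarith [dist_comm b y, dist_comm b z]
      have hA : dist a z + dist z y = dist a y := by
        apply le_antisymm _ (dist_triangle _ _ _)
        linarith
      have hB : dist y z + dist z b = dist y b := by
        apply le_antisymm _ (dist_triangle _ _ _)
        linarith [dist_comm y z, dist_comm y b]
      let Q : ℝ → T := Set.IccExtend zero_le_one q
      have hQ : Continuous Q := hq.Icc_extend'
      have Qe : ∀ s (hs : s ∈ Set.Icc (0:ℝ) 1), Q s = q ⟨s, hs⟩ := fun s hs =>
        Set.IccExtend_of_mem _ _ hs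
      have hQt : Q t = y := Qe t t.2
      have hQ0 : Q 0 = a := by rw [Qe 0 ⟨le_refl 0, zero_le_one⟩, q0]
      have hQ1 : Q 1 = b := by rw [Qe 1 ⟨zero_le_one, le_refl 1⟩, q1]
      obtain ⟨s, hs, hsz⟩ := connected_mem h4 (Q '' Set.Icc 0 t)
        (isPreconnected_Icc.image _ hQ.continuousOn) a y z
        ⟨0, ⟨le_refl _, t.2.1⟩, hQ0⟩ ⟨t, ⟨t.2.1, le_refl _⟩, hQt⟩ hA
      obtain ⟨u, hu, huz⟩ := connected_mem h4 (Q '' Set.Icc t 1)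
        (isPreconnected_Icc.image _ hQ.continuousOn) y b z
        ⟨t, ⟨le_refl _, t.2.2⟩, hQt⟩ ⟨1, ⟨t.2.2, le_refl _⟩, hQ1⟩ hB
      have hs' : s ∈ Set.Icc (0:ℝ) 1 := ⟨hs.1, hs.2.trans t.2.2⟩
      have hu' : u ∈ Set.Icc (0:ℝ) 1 := ⟨t.2.1.trans hu.1, hu.2⟩
      have hsu : s = u := by
        have : q ⟨s, hs'⟩ = q ⟨u, hu'⟩ := by rw [← Qe, ← Qe, hsz, huz]
        exact congrArg Subtype.val (hqi this)
      have hst : s = t := le_antisymm hs.2 (hsu ▸ hu.1)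
      have hzy' : z = y := by rw [← hsz, hst, hQt]
      rw [← hzy', hz1, hz2]; ring
    · intro x hx
      rw [hrf] at hx
      exact connected_mem h4 _ (isPreconnected_range hq) a b x ⟨_, q0⟩ ⟨_, q1⟩ hx

/-- infimum over the interval -/
noncomputable def mg (g : ℝ → ℝ) (s t : ℝ) : ℝ := sInf (g '' Set.Icc (min s t) (max s t))

theorem mg_comm (g : ℝ → ℝ) (s t : ℝ) : mg g s t = mg g t s := by
  unfold mg; rw [min_comm, max_comm]

theorem mg_le (g : ℝ → ℝ) (h0 : ∀ x, 0 ≤ g x) (s t r : ℝ)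
    (hr : r ∈ Set.Icc (min s t) (max s t)) : mg g s t ≤ g r :=
  csInf_le ⟨0, by rintro _ ⟨x, -, rfl⟩; exact h0 x⟩ ⟨r, hr, rfl⟩

theorem le_mg (g : ℝ → ℝ) (s t c : ℝ)
    (h : ∀ r ∈ Set.Icc (min s t) (max s t), c ≤ g r) : c ≤ mg g s t :=
  le_csInf ⟨g s, s, ⟨min_le_left _ _, le_max_left _ _⟩, rfl⟩
    (by rintro _ ⟨x, hx, rfl⟩; exact h x hx)

theorem mg_ultra (g : ℝ → ℝ) (h0 : ∀ x, 0 ≤ g x) (s t u : ℝ) :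
    min (mg g s t) (mg g t u) ≤ mg g s u := by
  apply le_mg
  intro r hr
  have : r ∈ Set.Icc (min s t) (max s t) ∨ r ∈ Set.Icc (min t u) (max t u) := by
    simp only [Set.mem_Icc, min_le_iff, le_max_iff] at *
    grind
  rcases this with h | h
  · exact (min_le_left _ _).trans (mg_le g h0 _ _ _ h)
  · exact (min_le_right _ _).trans (mg_le g h0 _ _ _ h)

theorem mg_half (g : ℝ → ℝ) (hc : Continuous g) (h0 : ∀ x, 0 ≤ g x) (s t c : ℝ) (hst : s ≤ t)
    (h1 : mg g s t ≤ c) (h2 : c ≤ g s) : ∃ u, g u = c ∧ mg g s u = c ∧ mg g u t = mg g s t := by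
  have hmm : Set.Icc (min s t) (max s t) = Set.Icc s t := by
    rw [min_eq_left hst, max_eq_right hst]
  obtain ⟨w, hw, hwm⟩ := isCompact_Icc.exists_isMinOn (Set.nonempty_Icc.2 hst) hc.continuousOn
  have hgw : g w ≤ c := by
    refine le_trans (le_mg g s t _ ?_) h1
    rw [hmm]; exact fun r hr => hwm hr
  have hne : (Set.Icc s t ∩ g ⁻¹' {c}).Nonempty := by
    obtain ⟨v, hv, e⟩ := intermediate_value_Icc' hw.1 hc.continuousOn ⟨hgw, h2⟩
    exact ⟨v, ⟨hv.1, hv.2.trans hw.2⟩, e⟩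
  obtain ⟨u, ⟨hu, hgu⟩, hul⟩ := (isCompact_Icc.inter_right
    (isClosed_singleton.preimage hc)).exists_isLeast hne
  have hgu : g u = c := hgu
  have hlow : ∀ v ∈ Set.Icc s u, c ≤ g v := by
    intro v hv
    by_contra hlt
    push Not at hlt
    obtain ⟨v', hv', e⟩ := intermediate_value_Icc' hv.1 hc.continuousOn ⟨hlt.le, h2⟩
    have : u ≤ v' := hul ⟨⟨hv'.1, hv'.2.trans (hv.2.trans hu.2)⟩, e⟩
    have : v = u := le_antisymm hv.2 (this.trans hv'.2)
    rw [this, hgu] at hlt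
    exact lt_irrefl _ hlt
  have hsu : mg g s u = c := by
    apply le_antisymm
    · rw [← hgu]; exact mg_le g h0 _ _ _ ⟨min_le_right _ _, le_max_right _ _⟩
    · apply le_mg
      rw [min_eq_left hu.1, max_eq_right hu.1]; exact hlow
  refine ⟨u, hgu, hsu, le_antisymm ?_ ?_⟩
  · have h := mg_ultra g h0 s u t
    have h' : mg g u t ≤ c := by
      rw [← hgu]; exact mg_le g h0 _ _ _ ⟨min_le_left _ _, le_max_left _ _⟩
    rwa [hsu, min_eq_right h'] at h
  · apply le_mg
    intro r hr
    apply mg_le g h0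
    rw [hmm]
    rw [min_eq_left hu.2, max_eq_right hu.2] at hr
    exact ⟨hu.1.trans hr.1, hr.2⟩

theorem mg_half' (g : ℝ → ℝ) (hc : Continuous g) (h0 : ∀ x, 0 ≤ g x) (s t c : ℝ)
    (h1 : mg g s t ≤ c) (h2 : c ≤ g s) : ∃ u, g u = c ∧ mg g s u = c ∧ mg g u t = mg g s t := by
  rcases le_total s t with h | h
  · exact mg_half g hc h0 s t c h h1 h2
  · have key : ∀ x y, mg (fun r => g (-r)) x y = mg g (-x) (-y) := by
      intro x y
      unfold mg
      congr 1
      rw [min_neg_neg, max_neg_neg, ← Set.image_neg_Icc, Set.image_image]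
    obtain ⟨u, e1, e2, e3⟩ := mg_half (fun r => g (-r)) (by fun_prop) (fun x => h0 _) (-s) (-t) c
      (by linarith) (by rw [key]; simpa using h1) (by simpa using h2)
    rw [key] at e2 e3
    rw [key] at e3
    simp only [neg_neg] at e2 e3
    exact ⟨-u, e1, e2, e3⟩

/-- Theorem 2.2: the metric space `T_g` coded by a continuous nonnegative function `g` with
compact support and `g(0) = 0` (not identically zero) is a compact real tree. Here `T_g` is
axiomatized as a metric space `T` together with a surjection `p : ℝ → T` (the canonical
projection, with `g` extended by `0` to the negative half-line) satisfying
`dist (p s) (p t) = g(s) + g(t) - 2 m_g(s,t)`, where `m_g(s,t) = inf_{[s∧t, s∨t]} g`. -/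
theorem stmt13 (g : ℝ → ℝ) (hg_cont : Continuous g) (hg_nonneg : ∀ x, 0 ≤ g x)
    (hg_neg : ∀ x ≤ (0 : ℝ), g x = 0) (hg_supp : HasCompactSupport g) (hg_ne : g ≠ 0)
    (T : Type) [MetricSpace T] (p : ℝ → T) (hp_surj : Function.Surjective p)
    (hp_dist : ∀ s t : ℝ,
      dist (p s) (p t) = g s + g t - 2 * sInf (g '' Set.Icc (min s t) (max s t))) :
    CompactSpace T ∧
    ∀ a b : T,
      (∃! f : Set.Icc (0 : ℝ) (dist a b) → T,
        Isometry f ∧ f ⟨0, le_refl 0, dist_nonneg⟩ = a ∧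
          f ⟨dist a b, dist_nonneg, le_refl _⟩ = b) ∧
      (∀ f : Set.Icc (0 : ℝ) (dist a b) → T,
        Isometry f → f ⟨0, le_refl 0, dist_nonneg⟩ = a →
          f ⟨dist a b, dist_nonneg, le_refl _⟩ = b →
        ∀ q : Set.Icc (0 : ℝ) 1 → T, Continuous q → Function.Injective q →
          q ⟨0, le_refl 0, zero_le_one⟩ = a → q ⟨1, zero_le_one, le_refl 1⟩ = b →
          Set.range q = Set.range f) := by
  have hd : ∀ s t : ℝ, dist (p s) (p t) = g s + g t - 2 * mg g s t := hp_dist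
  have h4 : FourPt T := by
    intro x y z w
    obtain ⟨x, rfl⟩ := hp_surj x
    obtain ⟨y, rfl⟩ := hp_surj y
    obtain ⟨z, rfl⟩ := hp_surj z
    obtain ⟨w, rfl⟩ := hp_surj w
    simp only [hd]
    have c1 := mg_comm g
    have u := mg_ultra g hg_nonneg
    have u1 := u x z y
    have u2 := u x w y
    have u3 := u z x w
    have u4 := u z y w
    have u5 := u x y z
    have u6 := u x w z
    have u7 := u y x w
    have u8 := u y z w
    have u9 := u x y w
    have u10 := u x z w
    have u11 := u y x z
    have u12 := u y w z
    rw [c1 z y] at u1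
    rw [c1 w y] at u2
    rw [c1 z x] at u3
    rw [c1 z y] at u4
    rw [c1 w z] at u6
    rw [c1 y x] at u7
    rw [c1 y x] at u11
    rw [c1 w z] at u12
    clear c1 u hp_dist hd
    generalize mg g x y = m1 at *
    generalize mg g z w = m2 at *
    generalize mg g x z = m3 at *
    generalize mg g y w = m4 at *
    generalize mg g x w = m5 at *
    generalize mg g y z = m6 at *
    rw [le_max_iff]
    by_contra hcon
    push Not at hcon
    obtain ⟨hc1, hc2⟩ := hcon
    rw [min_le_iff] at *
    grind
  have hseg : ∀ a b : T, ∀ r ∈ Set.Icc (0 : ℝ) (dist a b),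
      ∃ x, dist a x = r ∧ dist x b = dist a b - r := by
    intro a b r hr
    obtain ⟨s, rfl⟩ := hp_surj a
    obtain ⟨t, rfl⟩ := hp_surj b
    rw [hd] at *
    obtain ⟨hr0, hr1⟩ := hr
    rcases le_total r (g s - mg g s t) with h | h
    · obtain ⟨u, e1, e2, e3⟩ := mg_half' g hg_cont hg_nonneg s t (g s - r)
        (by linarith) (by linarith)
      refine ⟨p u, ?_, ?_⟩ <;> rw [hd] <;> linarith
    · have hc := mg_comm g t s
      obtain ⟨u, e1, e2, e3⟩ := mg_half' g hg_cont hg_nonneg t s (mg g s t + r - (g s - mg g s t))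
        (by linarith) (by linarith)
      have c1 := mg_comm g t u
      have c2 := mg_comm g u s
      refine ⟨p u, ?_, ?_⟩ <;> rw [hd] <;> linarith
  refine ⟨?_, tree_main h4 hseg⟩
  have hpc : Continuous p := by
    rw [continuous_iff_continuousAt]
    intro s
    rw [Metric.continuousAt_iff]
    intro ε hε
    obtain ⟨δ, hδ, h⟩ := Metric.continuousAt_iff.1 hg_cont.continuousAt (ε / 4) (by positivity)
    refine ⟨δ, hδ, ?_⟩
    intro t ht
    have hm : g s - ε / 4 ≤ mg g t s := by
      apply le_mg
      intro r hr
      have hrs : dist r s < δ := by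
        rw [Real.dist_eq] at *
        have := Set.abs_sub_right_of_mem_uIcc (show r ∈ Set.uIcc t s from hr)
        rw [abs_sub_comm] at ht
        rw [abs_sub_comm]
        linarith
      have := h hrs
      rw [Real.dist_eq, abs_lt] at this
      linarith
    have := h ht
    rw [Real.dist_eq, abs_lt] at this
    rw [hd]
    linarith
  have hz : ∀ s, g s = 0 → p s = p 0 := by
    intro s hs
    apply dist_le_zero.1
    rw [hd, hs, hg_neg 0 le_rfl]
    have := le_mg g s 0 0 (fun r _ => hg_nonneg r)
    linarith
  have hK : IsCompact (p '' (tsupport g ∪ {0})) :=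
    (IsCompact.union hg_supp isCompact_singleton).image hpc
  refine ⟨?_⟩
  convert hK
  symm
  rw [Set.eq_univ_iff_forall]
  intro x
  obtain ⟨s, rfl⟩ := hp_surj x
  by_cases hs : g s = 0
  · exact ⟨0, Or.inr rfl, (hz s hs).symm⟩
  · exact ⟨s, Or.inl (subset_tsupport g hs), rfl⟩
end

section
/- Let ζ > 0 be the supremum of the support of g and let s_0 ∈ [0, ζ). For r ≥ 0, let r̄ denote the unique element of [0, ζ) such that r - r̄ is an integer multiple of ζ. Define g'(s) = g(s_0) + g(\overline{s_0 + s}) - 2 m_g( s_0 ∧ \overline{s_0+s}, s_0 ∨ \overline{s_0+s} ) for s ∈ [0, ζ] and g'(s) = 0 for s > ζ. Then: (a) g' is continuous with compact support and g'(0) = 0 (so T_{g'} is defined); (b) for every s, t ∈ [0, ζ], d_{g'}(s,t) = d_g(\overline{s_0+s}, \overline{s_0+t}); (c) there exists a unique isometry R from T_{g'} onto T_g such that R(p_{g'}(s)) = p_g(\overline{s_0+s}) for every s ∈ [0, ζ]. -/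
/-- infimum of `g` between `a` and `b` -/
noncomputable def rrM (g : ℝ → ℝ) (a b : ℝ) : ℝ := sInf (g '' Set.uIcc a b)

/-- tree pseudo-distance -/
noncomputable def rrD (g : ℝ → ℝ) (a b : ℝ) : ℝ := g a + g b - 2 * rrM g a b

lemma rrM_comm (g : ℝ → ℝ) (a b : ℝ) : rrM g a b = rrM g b a := by
  unfold rrM; rw [Set.uIcc_comm]

lemma rrD_comm (g : ℝ → ℝ) (a b : ℝ) : rrD g a b = rrD g b a := by
  unfold rrD; rw [rrM_comm]; ring

lemma rrM_exists {g : ℝ → ℝ} (hg : Continuous g) (a b : ℝ) :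
    ∃ c ∈ Set.uIcc a b, rrM g a b = g c := by
  obtain ⟨c, hc, h⟩ := (isCompact_uIcc (a := a) (b := b)).exists_sInf_image_eq
    Set.nonempty_uIcc hg.continuousOn
  exact ⟨c, hc, h⟩

lemma rrM_le {g : ℝ → ℝ} (hg : Continuous g) {a b x : ℝ} (hx : x ∈ Set.uIcc a b) :
    rrM g a b ≤ g x :=
  csInf_le ((isCompact_uIcc.image hg).bddBelow) (Set.mem_image_of_mem g hx)

lemma rrM_self {g : ℝ → ℝ} (a : ℝ) : rrM g a a = g a := by
  simp [rrM]

lemma rrD_self {g : ℝ → ℝ} (a : ℝ) : rrD g a a = 0 := by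
  simp [rrD, rrM_self]; ring

lemma rrD_nonneg {g : ℝ → ℝ} (hg : Continuous g) (a b : ℝ) : 0 ≤ rrD g a b := by
  have h1 := rrM_le hg (Set.left_mem_uIcc (a := a) (b := b))
  have h2 := rrM_le hg (Set.right_mem_uIcc (a := a) (b := b))
  unfold rrD; linarith

lemma rrM_split {g : ℝ → ℝ} (hg : Continuous g) {a b c : ℝ} (hab : a ≤ b) (hbc : b ≤ c) :
    rrM g a c = min (rrM g a b) (rrM g b c) := by
  unfold rrM
  rw [Set.uIcc_of_le hab, Set.uIcc_of_le hbc, Set.uIcc_of_le (hab.trans hbc),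
    ← Set.Icc_union_Icc_eq_Icc hab hbc, Set.image_union,
    csInf_union ((isCompact_Icc.image hg).bddBelow) ((Set.nonempty_Icc.2 hab).image g)
      ((isCompact_Icc.image hg).bddBelow) ((Set.nonempty_Icc.2 hbc).image g)]

lemma rrM_zero {g : ℝ → ℝ} (hg : Continuous g) (h0 : ∀ x, 0 ≤ g x) {a b x : ℝ}
    (hx : x ∈ Set.uIcc a b) (hgx : g x = 0) : rrM g a b = 0 := by
  obtain ⟨c, hc, h⟩ := rrM_exists hg a b
  have := rrM_le hg hx
  have := h0 c
  linarith

lemma rrD_zero {g : ℝ → ℝ} (hg : Continuous g) (h0 : ∀ x, 0 ≤ g x) {a b : ℝ}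
    (ha : g a = 0) (hb : g b = 0) : rrD g a b = 0 := by
  unfold rrD
  rw [rrM_zero hg h0 Set.left_mem_uIcc ha, ha, hb]; ring

lemma rrM_continuous {g : ℝ → ℝ} (hg : Continuous g) (a : ℝ) : Continuous (rrM g a) := by
  have h := (isCompact_Icc (a := (0:ℝ)) (b := 1)).continuous_sInf
    (f := fun (x : ℝ) (t : ℝ) => g (a + t * (x - a))) (by
      simp only [Function.HasUncurry.uncurry]; fun_prop)
  have e : rrM g a = fun x => sInf ((fun t : ℝ => g (a + t * (x - a))) '' Set.Icc 0 1) := by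
    funext x
    unfold rrM
    rw [← segment_eq_uIcc, segment_eq_image', Set.image_image]
    simp
  rw [e]; exact h

lemma rrD_continuous {g : ℝ → ℝ} (hg : Continuous g) (a : ℝ) : Continuous (rrD g a) := by
  unfold rrD
  have := rrM_continuous hg a
  fun_prop

/-- infimum of the distance to `s` over an interval to the right of `s` -/
lemma rr_right {g : ℝ → ℝ} (hg : Continuous g) {s a b : ℝ} (hsa : s ≤ a) (hab : a ≤ b) :
    IsLeast (rrD g s '' Set.Icc a b) (g s - rrM g s a - rrM g s b + rrM g a b) := by
  have hsplit := rrM_split hg hsa hab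
  rcases le_or_gt (rrM g s a) (rrM g a b) with h | h
  · rw [min_eq_left h] at hsplit
    have key : ∀ x ∈ Set.Icc a b, rrM g s x = rrM g s a := by
      intro x hx
      have h1 := rrM_split hg hsa hx.1
      have h2 := rrM_split hg (hsa.trans hx.1) hx.2
      have h3 : rrM g s x ≤ rrM g s a := h1 ▸ min_le_left _ _
      have h4 : rrM g s b ≤ rrM g s x := h2 ▸ min_le_left _ _
      linarith
    constructor
    · obtain ⟨c, hc, h'⟩ := rrM_exists hg a b
      rw [Set.uIcc_of_le hab] at hc
      refine ⟨c, hc, ?_⟩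
      unfold rrD
      rw [key c hc]; linarith
    · rintro _ ⟨x, hx, rfl⟩
      unfold rrD
      rw [key x hx]
      have := rrM_le hg (Set.uIcc_of_le hab ▸ hx)
      linarith
  · rw [min_eq_right h.le] at hsplit
    constructor
    · obtain ⟨c, hc, h'⟩ := rrM_exists hg a b
      rw [Set.uIcc_of_le hab] at hc
      have hcomp : IsCompact (Set.Icc a b ∩ {x | g x ≤ rrM g s a}) :=
        isCompact_Icc.inter_right (isClosed_le hg continuous_const)
      obtain ⟨x, ⟨hx, hgx⟩, hmin⟩ := hcomp.exists_isLeast ⟨c, hc, by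
        simp only [Set.mem_ofPred_eq]; linarith⟩
      simp only [Set.mem_ofPred_eq] at hgx
      have hax : ∀ y ∈ Set.Ico a x, rrM g s a < g y := by
        intro y hy
        by_contra hcon
        have := hmin ⟨⟨hy.1, hy.2.le.trans hx.2⟩, not_lt.1 hcon⟩
        exact absurd hy.2 (not_lt.2 this)
      have hge : rrM g s a ≤ g x := by
        rcases hx.1.eq_or_lt with e | hlt
        · rw [← e]; exact rrM_le hg Set.right_mem_uIcc
        · have hcl : x ∈ closure (Set.Ico a x) := by
            rw [closure_Ico hlt.ne]; exact ⟨hlt.le, le_rfl⟩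
          exact closure_minimal (t := {y | rrM g s a ≤ g y}) (fun y hy => (hax y hy).le)
            (isClosed_le continuous_const hg) hcl
      have hgx' : g x = rrM g s a := le_antisymm hgx hge
      have hM : rrM g s x = rrM g s a := by
        rw [rrM_split hg hsa hx.1, min_eq_left]
        obtain ⟨d, hd, hd'⟩ := rrM_exists hg a x
        rw [Set.uIcc_of_le hx.1] at hd
        rw [hd']
        rcases hd.2.eq_or_lt with e | hlt
        · rw [e]; exact hge
        · exact (hax d ⟨hd.1, hlt⟩).le
      refine ⟨x, hx, ?_⟩
      unfold rrD
      rw [hM]; linarith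
    · rintro _ ⟨x, hx, rfl⟩
      unfold rrD
      have h1 : rrM g s x ≤ rrM g s a := by
        rw [rrM_split hg hsa hx.1]; exact min_le_left _ _
      have h2 : rrM g s x ≤ g x := rrM_le hg Set.right_mem_uIcc
      linarith

lemma rrM_neg (g : ℝ → ℝ) (a b : ℝ) : rrM (fun x => g (-x)) (-a) (-b) = rrM g a b := by
  unfold rrM
  congr 1
  rw [← Set.image_image g (fun x => -x), Set.image_neg_eq_neg, Set.neg_uIcc]
  simp

lemma rr_left {g : ℝ → ℝ} (hg : Continuous g) {s a b : ℝ} (hsb : b ≤ s) (hab : a ≤ b) :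
    IsLeast (rrD g s '' Set.Icc a b) (g s - rrM g s a - rrM g s b + rrM g a b) := by
  have h := rr_right (g := fun x => g (-x)) (by fun_prop) (neg_le_neg hsb) (neg_le_neg hab)
  simp only [rrM_neg, neg_neg] at h
  have e : rrD (fun x => g (-x)) (-s) '' Set.Icc (-b) (-a) = rrD g s '' Set.Icc a b := by
    rw [← Set.neg_Icc, ← Set.image_neg_eq_neg, Set.image_image]
    congr 1
    funext x
    simp only [rrD, rrM_neg, neg_neg]
  rw [e, rrM_comm g b a] at h
  convert h using 1
  ring


/-- Lemma 2.3 (re-rooting): let `g` be continuous, nonnegative, with compact support,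
vanishing on `(-∞,0]`, not identically zero, let `ζ > 0` be the supremum of its support, let
`s₀ ∈ [0,ζ)`, and let `r̄ = r - ζ⌊r/ζ⌋` be the representative of `r` modulo `ζ` in `[0,ζ)`.
Define `g'(s) = g(s₀) + g(\overline{s₀+s}) - 2 m_g(s₀, \overline{s₀+s})` for `s ∈ [0,ζ]` and
`g'(s) = 0` otherwise. Then: (a) `g'` is continuous with compact support and `g'(0) = 0`;
(b) `d_{g'}(s,t) = d_g(\overline{s₀+s}, \overline{s₀+t})` for `s, t ∈ [0,ζ]`; (c) for any
metric-space realizations `(T, p)` of `T_g` and `(T', p')` of `T_{g'}` there is a unique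
isometry `R` from `T_{g'}` onto `T_g` with `R(p_{g'}(s)) = p_g(\overline{s₀+s})` for
`s ∈ [0,ζ]`. -/
theorem stmt14 (g : ℝ → ℝ) (hg_cont : Continuous g) (hg_nonneg : ∀ x, 0 ≤ g x)
    (hg_neg : ∀ x ≤ (0 : ℝ), g x = 0) (hg_supp : HasCompactSupport g) (hg_ne : g ≠ 0)
    (ζ : ℝ) (hζ_pos : 0 < ζ) (hζ : ζ = sSup (Function.support g))
    (s₀ : ℝ) (hs₀ : 0 ≤ s₀) (hs₀' : s₀ < ζ)
    (bar : ℝ → ℝ) (hbar : ∀ r : ℝ, bar r = r - ζ * (⌊r / ζ⌋ : ℝ))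
    (g' : ℝ → ℝ)
    (hg' : ∀ s : ℝ, g' s =
      if 0 ≤ s ∧ s ≤ ζ then
        g s₀ + g (bar (s₀ + s)) -
          2 * sInf (g '' Set.Icc (min s₀ (bar (s₀ + s))) (max s₀ (bar (s₀ + s))))
      else 0) :
    (Continuous g' ∧ HasCompactSupport g' ∧ g' 0 = 0) ∧
    (∀ s t : ℝ, 0 ≤ s → s ≤ ζ → 0 ≤ t → t ≤ ζ →
      g' s + g' t - 2 * sInf (g' '' Set.Icc (min s t) (max s t)) =
        g (bar (s₀ + s)) + g (bar (s₀ + t)) -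
          2 * sInf (g '' Set.Icc (min (bar (s₀ + s)) (bar (s₀ + t)))
            (max (bar (s₀ + s)) (bar (s₀ + t))))) ∧
    (∀ (T T' : Type) [MetricSpace T] [MetricSpace T']
      (p : ℝ → T) (p' : ℝ → T'),
      Function.Surjective p → Function.Surjective p' →
      (∀ s t : ℝ, dist (p s) (p t) =
        g s + g t - 2 * sInf (g '' Set.Icc (min s t) (max s t))) →
      (∀ s t : ℝ, dist (p' s) (p' t) =
        g' s + g' t - 2 * sInf (g' '' Set.Icc (min s t) (max s t))) →
      ∃! R : T' → T, Isometry R ∧ Function.Surjective R ∧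
        ∀ s : ℝ, 0 ≤ s → s ≤ ζ → R (p' s) = p (bar (s₀ + s))) := by

  have hbdd : BddAbove (Function.support g) :=
    (hg_supp.isCompact.bddAbove).mono (subset_tsupport g)
  have hgt : ∀ x, ζ < x → g x = 0 := by
    intro x hx
    by_contra hne
    have := le_csSup hbdd (Function.mem_support.2 hne)
    linarith
  have hgζ : g ζ = 0 := by
    have hcl : ζ ∈ closure (Set.Ioi ζ) := by rw [closure_Ioi]; exact Set.self_mem_Ici
    exact closure_minimal (t := {y | g y = 0}) (fun y hy => hgt y hy)
      (isClosed_eq hg_cont continuous_const) hcl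
  have hg0 : g 0 = 0 := hg_neg 0 le_rfl
  have hbar0 : ∀ r, 0 ≤ r → r < ζ → bar r = r := by
    intro r h1 h2
    have : ⌊r / ζ⌋ = 0 := by
      rw [Int.floor_eq_iff]
      constructor
      · push_cast; positivity
      · push_cast; rw [div_lt_iff₀ hζ_pos]; linarith
    rw [hbar, this]; simp
  have hbar1 : ∀ r, ζ ≤ r → r < 2 * ζ → bar r = r - ζ := by
    intro r h1 h2
    have : ⌊r / ζ⌋ = 1 := by
      rw [Int.floor_eq_iff]
      constructor
      · push_cast; rw [le_div_iff₀ hζ_pos]; linarith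
      · push_cast; rw [div_lt_iff₀ hζ_pos]; linarith
    rw [hbar, this]; simp
  have hin : ∀ s, 0 ≤ s → s ≤ ζ → g' s = rrD g s₀ (bar (s₀ + s)) := by
    intro s h1 h2
    rw [hg', if_pos ⟨h1, h2⟩]; rfl
  have hfζ : rrD g s₀ ζ = g s₀ := by
    unfold rrD
    rw [rrM_zero hg_cont hg_nonneg Set.right_mem_uIcc hgζ, hgζ]; ring
  have hf0 : rrD g s₀ 0 = g s₀ := by
    unfold rrD
    rw [rrM_zero hg_cont hg_nonneg Set.right_mem_uIcc hg0, hg0]; ring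
  have hR : ∀ s, ζ - s₀ ≤ s → s ≤ ζ → g' s = rrD g s₀ (s₀ + s - ζ) := by
    intro s h1 h2
    rw [hin s (by linarith) h2, hbar1 _ (by linarith) (by linarith)]
  have hL : ∀ s, 0 ≤ s → s ≤ ζ - s₀ → g' s = rrD g s₀ (s₀ + s) := by
    intro s h1 h2
    rcases h2.eq_or_lt with e | h3
    · rw [hR s e.ge (by linarith), e]
      rw [show s₀ + (ζ - s₀) - ζ = 0 by ring, show s₀ + (ζ - s₀) = ζ by ring, hf0, hfζ]
    · rw [hin s h1 (by linarith), hbar0 _ (by linarith) (by linarith)]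
  have hg'0 : g' 0 = 0 := by
    rw [hL 0 le_rfl (by linarith), add_zero, rrD_self]
  have hg'ζ : g' ζ = 0 := by
    rw [hR ζ (by linarith) le_rfl, add_sub_cancel_right, rrD_self]
  have hout : ∀ s, ¬ (0 ≤ s ∧ s ≤ ζ) → g' s = 0 := fun s hs => by rw [hg', if_neg hs]
  have hcont : Continuous g' := by
    have e : g' = fun s => if s ≤ ζ - s₀ then rrD g s₀ (s₀ + max s 0)
        else rrD g s₀ (s₀ + min s ζ - ζ) := by
      funext s
      split_ifs with h
      · rcases le_total 0 s with h0 | h0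
        · rw [max_eq_left h0, hL s h0 h]
        · rw [max_eq_right h0, add_zero, rrD_self]
          rcases h0.eq_or_lt with h1 | h1
          · rw [h1, hg'0]
          · exact hout s (fun hh => by linarith [hh.1])
      · push Not at h
        rcases le_total s ζ with h0 | h0
        · rw [min_eq_left h0, hR s h.le h0]
        · rw [min_eq_right h0, add_sub_cancel_right, rrD_self]
          rcases h0.eq_or_lt with h1 | h1
          · rw [← h1, hg'ζ]
          · exact hout s (fun hh => by linarith [hh.2])
    have hD := rrD_continuous hg_cont s₀
    rw [e]
    refine Continuous.if_le (by fun_prop) (by fun_prop) continuous_id continuous_const ?_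
    intro x hx
    subst hx
    rw [max_eq_left (by linarith), min_eq_left (by linarith)]
    rw [show s₀ + (ζ - s₀) - ζ = 0 by ring, show s₀ + (ζ - s₀) = ζ by ring, hf0, hfζ]
  have hg'nn : ∀ s, 0 ≤ g' s := by
    intro s
    by_cases h : 0 ≤ s ∧ s ≤ ζ
    · rw [hin s h.1 h.2]; exact rrD_nonneg hg_cont _ _
    · rw [hout s h]
  have hsupp : HasCompactSupport g' :=
    HasCompactSupport.intro (isCompact_Icc (a := (0:ℝ)) (b := ζ)) (fun x hx => hout x hx)
  have hb1 : ∀ s t : ℝ, 0 ≤ s → s ≤ t → t ≤ ζ →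
      rrD g' s t = rrD g (bar (s₀ + s)) (bar (s₀ + t)) := by
    intro s t h0s hst htζ
    suffices hl : IsLeast (g' '' Set.Icc s t) (g s₀ - rrM g s₀ (bar (s₀ + s))
        - rrM g s₀ (bar (s₀ + t)) + rrM g (bar (s₀ + s)) (bar (s₀ + t))) by
      have hM0 : rrM g' s t = sInf (g' '' Set.Icc s t) := by
        unfold rrM
        rw [Set.uIcc_of_le hst]
      have hM := hM0.trans hl.csInf_eq
      have e1 := hin s h0s (hst.trans htζ)
      have e2 := hin t (h0s.trans hst) htζ
      unfold rrD at e1 e2 ⊢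
      rw [hM, e1, e2]; ring
    rcases lt_or_ge t (ζ - s₀) with ht | ht
    · rw [hbar0 (s₀ + s) (by linarith) (by linarith), hbar0 (s₀ + t) (by linarith) (by linarith)]
      have h := rr_right hg_cont (s := s₀) (a := s₀ + s) (b := s₀ + t) (by linarith) (by linarith)
      convert h using 1
      rw [← Set.image_const_add_Icc, Set.image_image]
      exact Set.image_congr (fun x hx => hL x (by linarith [hx.1]) (by linarith [hx.2]))
    · have hbt := hbar1 (s₀ + t) (by linarith) (by linarith)
      rcases lt_or_ge s (ζ - s₀) with hs | hs
      · rw [hbar0 (s₀ + s) (by linarith) (by linarith), hbt]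
        have e : g' '' Set.Icc s t = rrD g s₀ '' Set.Icc (s₀ + s) ζ ∪
            rrD g s₀ '' Set.Icc 0 (s₀ + t - ζ) := by
          rw [← Set.Icc_union_Icc_eq_Icc hs.le ht, Set.image_union]
          congr 1
          · have : Set.Icc (s₀ + s) ζ = (fun x => s₀ + x) '' Set.Icc s (ζ - s₀) := by
              rw [Set.image_const_add_Icc]; congr 1; ring
            rw [this, Set.image_image]
            exact Set.image_congr (fun x hx => hL x (by linarith [hx.1]) (by linarith [hx.2]))
          · have : Set.Icc 0 (s₀ + t - ζ) = (fun x => (s₀ - ζ) + x) '' Set.Icc (ζ - s₀) t := by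
              rw [Set.image_const_add_Icc]; congr 1 <;> ring
            rw [this, Set.image_image]
            refine Set.image_congr (fun x hx => ?_)
            rw [hR x (by linarith [hx.1]) (by linarith [hx.2])]
            congr 1; ring
        have h1 := rr_right hg_cont (s := s₀) (a := s₀ + s) (b := ζ) (by linarith) (by linarith)
        have h2 := rr_left hg_cont (s := s₀) (a := 0) (b := s₀ + t - ζ) (by linarith) (by linarith)
        rw [e]
        refine Eq.subst (motive := fun v => IsLeast _ v) ?_ (h1.union h2)
        rw [rrM_zero hg_cont hg_nonneg (a := s₀) Set.right_mem_uIcc hgζ,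
          rrM_zero hg_cont hg_nonneg (a := s₀ + s) Set.right_mem_uIcc hgζ,
          rrM_zero hg_cont hg_nonneg (a := s₀) Set.right_mem_uIcc hg0,
          rrM_zero hg_cont hg_nonneg (a := 0) Set.left_mem_uIcc hg0,
          rrM_comm g (s₀ + s), rrM_split hg_cont (a := s₀ + t - ζ) (b := s₀) (c := s₀ + s)
            (by linarith) (by linarith), rrM_comm g (s₀ + t - ζ)]
        rcases le_total (rrM g s₀ (s₀ + t - ζ)) (rrM g s₀ (s₀ + s)) with h | h
        · rw [min_eq_left h, min_eq_left (by linarith)]; ring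
        · rw [min_eq_right h, min_eq_right (by linarith)]; ring
      · rw [hbar1 (s₀ + s) (by linarith) (by linarith), hbt]
        have h := rr_left hg_cont (s := s₀) (a := s₀ + s - ζ) (b := s₀ + t - ζ)
          (by linarith) (by linarith)
        convert h using 1
        have : Set.Icc (s₀ + s - ζ) (s₀ + t - ζ) = (fun x => (s₀ - ζ) + x) '' Set.Icc s t := by
          rw [Set.image_const_add_Icc]; congr 1 <;> ring
        rw [this, Set.image_image]
        refine Set.image_congr (fun x hx => ?_)
        rw [hR x (by linarith [hx.1]) (by linarith [hx.2])]
        congr 1; ring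
  have hb : ∀ s t : ℝ, 0 ≤ s → s ≤ ζ → 0 ≤ t → t ≤ ζ →
      rrD g' s t = rrD g (bar (s₀ + s)) (bar (s₀ + t)) := by
    intro s t h1 h2 h3 h4
    rcases le_total s t with h | h
    · exact hb1 s t h1 h h4
    · rw [rrD_comm, hb1 t s h3 h h2, rrD_comm]
  refine ⟨⟨hcont, hsupp, hg'0⟩, hb, ?_⟩
  intro T T' _ _ p p' hp hp' hd hd'
  replace hd : ∀ s t, dist (p s) (p t) = rrD g s t := hd
  replace hd' : ∀ s t, dist (p' s) (p' t) = rrD g' s t := hd'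
  have hsur' : ∀ y, ∃ s, 0 ≤ s ∧ s ≤ ζ ∧ p' s = y := by
    intro y
    obtain ⟨r, rfl⟩ := hp' y
    by_cases h : 0 ≤ r ∧ r ≤ ζ
    · exact ⟨r, h.1, h.2, rfl⟩
    · refine ⟨0, le_rfl, hζ_pos.le, ?_⟩
      rw [← dist_eq_zero, hd']
      exact rrD_zero hcont hg'nn hg'0 (hout r h)
  have hsur : ∀ x, ∃ s, 0 ≤ s ∧ s ≤ ζ ∧ p (bar (s₀ + s)) = x := by
    have hmain : ∀ r, 0 ≤ r → r < ζ → ∃ s, 0 ≤ s ∧ s ≤ ζ ∧ p (bar (s₀ + s)) = p r := by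
      intro r h1 h2
      rcases le_total s₀ r with h | h
      · refine ⟨r - s₀, by linarith, by linarith, ?_⟩
        rw [hbar0 _ (by linarith) (by linarith)]; congr 1; ring
      · refine ⟨r - s₀ + ζ, by linarith, by linarith, ?_⟩
        rw [hbar1 _ (by linarith) (by linarith)]; congr 1; ring
    intro x
    obtain ⟨r, rfl⟩ := hp x
    by_cases h : 0 ≤ r ∧ r < ζ
    · exact hmain r h.1 h.2
    · have hr : g r = 0 := by
        rcases le_total r 0 with h1 | h1
        · exact hg_neg r h1
        · have : ζ ≤ r := not_lt.1 (fun h2 => h ⟨h1, h2⟩)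
          rcases this.eq_or_lt with e | h3
          · rw [← e, hgζ]
          · exact hgt r h3
      have : p r = p 0 := by
        rw [← dist_eq_zero, hd]
        exact rrD_zero hg_cont hg_nonneg hr hg0
      rw [this]
      exact hmain 0 le_rfl hζ_pos
  choose σ hσ0 hσ1 hσ2 using hsur'
  have hRp : ∀ s : ℝ, 0 ≤ s → s ≤ ζ → p (bar (s₀ + σ (p' s))) = p (bar (s₀ + s)) := by
    intro s h1 h2
    rw [← dist_eq_zero, hd, ← hb _ _ (hσ0 _) (hσ1 _) h1 h2, ← hd', hσ2, dist_self]
  refine ⟨fun y => p (bar (s₀ + σ y)), ⟨?_, ?_, hRp⟩, ?_⟩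
  · refine Isometry.of_dist_eq (fun x y => ?_)
    rw [hd, ← hb _ _ (hσ0 _) (hσ1 _) (hσ0 _) (hσ1 _), ← hd', hσ2, hσ2]
  · intro x
    obtain ⟨s, h1, h2, h3⟩ := hsur x
    exact ⟨p' s, by rw [← h3]; exact hRp s h1 h2⟩
  · rintro R ⟨-, -, h⟩
    funext y
    have := h (σ y) (hσ0 y) (hσ1 y)
    rw [hσ2] at this
    exact this
end

section
/- The set R = { (p_g(t), p_{g'}(t)) : t ≥ 0 } is a correspondence between T_g and T_{g'} (every point of T_g is related to at least one point of T_{g'} and vice versa) containing the pair of roots (p_g(0), p_{g'}(0)), and its distortion satisfies dis(R) = sup{ |d_g(σ, η) - d_{g'}(σ', η')| : (σ, σ') ∈ R, (η, η') ∈ R } ≤ 4 ‖g - g'‖_∞, where ‖g - g'‖_∞ = sup_{t ≥ 0} |g(t) - g'(t)|. Consequently, the Gromov–Hausdorff distance between the compact metric spaces T_g and T_{g'} is at most 2 ‖g - g'‖_∞. -/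
open Metric in
theorem aux_gh (T T' : Type) [MetricSpace T] [MetricSpace T']
    [CompactSpace T] [CompactSpace T'] [Nonempty T] [Nonempty T']
    (p : ℝ → T) (p' : ℝ → T')
    (hp : Function.Surjective p) (hp' : Function.Surjective p') (M : ℝ)
    (H : ∀ s t, |dist (p s) (p t) - dist (p' s) (p' t)| ≤ 4 * M) (hM : 0 ≤ M) :
    GromovHausdorff.ghDist T T' ≤ 2 * M := by
  refine le_of_forall_pos_le_add fun δ δ0 => ?_
  have H2 : ∀ s t, |dist (p s) (p t) - dist (p' s) (p' t)| ≤ 2 * (2 * M + δ) :=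
    fun s t => (H s t).trans (by linarith)
  let _ : MetricSpace (T ⊕ T') := glueMetricApprox p p' (2 * M + δ) (by linarith) H2
  have Il : Isometry (@Sum.inl T T') := Isometry.of_dist_eq fun x y => rfl
  have Ir : Isometry (@Sum.inr T T') := Isometry.of_dist_eq fun x y => rfl
  refine (GromovHausdorff.ghDist_le_hausdorffDist Il Ir).trans ?_
  refine hausdorffDist_le_of_mem_dist (by linarith) ?_ ?_
  · rintro _ ⟨x, rfl⟩
    obtain ⟨t, rfl⟩ := hp x
    exact ⟨_, ⟨p' t, rfl⟩, le_of_eq (glueDist_glued_points p p' (2 * M + δ) t)⟩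
  · rintro _ ⟨x, rfl⟩
    obtain ⟨t, rfl⟩ := hp' x
    refine ⟨_, ⟨p t, rfl⟩, ?_⟩
    rw [dist_comm]
    exact le_of_eq (glueDist_glued_points p p' (2 * M + δ) t)

theorem aux_inf (g g' : ℝ → ℝ) (hg : ∀ x, 0 ≤ g x) (M : ℝ)
    (H : ∀ t, |g t - g' t| ≤ M) (a b : ℝ) (hab : a ≤ b) :
    sInf (g '' Set.Icc a b) ≤ sInf (g' '' Set.Icc a b) + M := by
  rw [← sub_le_iff_le_add]
  refine le_csInf ((Set.nonempty_Icc.2 hab).image _) ?_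
  rintro _ ⟨r, hr, rfl⟩
  have h1 : sInf (g '' Set.Icc a b) ≤ g r :=
    csInf_le ⟨0, by rintro _ ⟨y, _, rfl⟩; exact hg y⟩ ⟨r, hr, rfl⟩
  have := (abs_le.1 (H r)).2
  linarith

/-- Lemma 2.4: let `g, g'` be two coding functions and `(T, p)`, `(T', p')` metric-space
realizations of the coded trees `T_g`, `T_{g'}`. Then
`R = {(p_g(t), p_{g'}(t)) : t ≥ 0}` is a correspondence between `T_g` and `T_{g'}` containing
the pair of roots, its distortion is at most `4‖g - g'‖_∞`, and consequently
`d_{GH}(T_g, T_{g'}) ≤ 2‖g - g'‖_∞`. -/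
theorem stmt15 (g g' : ℝ → ℝ)
    (hg_cont : Continuous g) (hg_nonneg : ∀ x, 0 ≤ g x)
    (hg_neg : ∀ x ≤ (0 : ℝ), g x = 0) (hg_supp : HasCompactSupport g) (hg_ne : g ≠ 0)
    (hg'_cont : Continuous g') (hg'_nonneg : ∀ x, 0 ≤ g' x)
    (hg'_neg : ∀ x ≤ (0 : ℝ), g' x = 0) (hg'_supp : HasCompactSupport g') (hg'_ne : g' ≠ 0)
    (T T' : Type) [MetricSpace T] [MetricSpace T']
    [CompactSpace T] [CompactSpace T'] [Nonempty T] [Nonempty T']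
    (p : ℝ → T) (p' : ℝ → T')
    (hp_surj : Function.Surjective p) (hp'_surj : Function.Surjective p')
    (hp_dist : ∀ s t : ℝ, dist (p s) (p t) =
      g s + g t - 2 * sInf (g '' Set.Icc (min s t) (max s t)))
    (hp'_dist : ∀ s t : ℝ, dist (p' s) (p' t) =
      g' s + g' t - 2 * sInf (g' '' Set.Icc (min s t) (max s t)))
    (R : Set (T × T')) (hR : R = {x | ∃ t : ℝ, x = (p t, p' t)}) :
    (∀ x : T, ∃ y : T', (x, y) ∈ R) ∧
    (∀ y : T', ∃ x : T, (x, y) ∈ R) ∧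
    (p 0, p' 0) ∈ R ∧
    (∀ (a b : T) (a' b' : T'), (a, a') ∈ R → (b, b') ∈ R →
      |dist a b - dist a' b'| ≤ 4 * ⨆ t : ℝ, |g t - g' t|) ∧
    GromovHausdorff.ghDist T T' ≤ 2 * ⨆ t : ℝ, |g t - g' t| := by
  have hb : BddAbove (Set.range fun t : ℝ => |g t - g' t|) := by
    obtain ⟨C, hC⟩ := hg_supp.exists_bound_of_continuous hg_cont
    obtain ⟨C', hC'⟩ := hg'_supp.exists_bound_of_continuous hg'_cont
    refine ⟨C + C', ?_⟩
    rintro _ ⟨t, rfl⟩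
    have h1 := hC t
    have h2 := hC' t
    rw [Real.norm_eq_abs] at h1 h2
    exact (abs_sub _ _).trans (add_le_add h1 h2)
  have hle : ∀ t, |g t - g' t| ≤ ⨆ t : ℝ, |g t - g' t| := fun t => le_ciSup hb t
  generalize (⨆ t : ℝ, |g t - g' t|) = M at hle ⊢
  have hM : 0 ≤ M := (abs_nonneg _).trans (hle 0)
  have hle' : ∀ t, |g' t - g t| ≤ M := fun t => by rw [abs_sub_comm]; exact hle t
  have key : ∀ s t, |dist (p s) (p t) - dist (p' s) (p' t)| ≤ 4 * M := by
    intro s t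
    rw [hp_dist, hp'_dist]
    have h1 := aux_inf g g' hg_nonneg M hle _ _ (min_le_max (a := s) (b := t))
    have h2 := aux_inf g' g hg'_nonneg M hle' _ _ (min_le_max (a := s) (b := t))
    have h3 := abs_le.1 (hle s)
    have h4 := abs_le.1 (hle t)
    rw [abs_le]
    constructor <;> linarith [h3.1, h3.2, h4.1, h4.2]
  subst hR
  refine ⟨fun x => ?_, fun y => ?_, ⟨0, rfl⟩, ?_, aux_gh T T' p p' hp_surj hp'_surj M key hM⟩
  · obtain ⟨t, rfl⟩ := hp_surj x
    exact ⟨p' t, t, rfl⟩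
  · obtain ⟨t, rfl⟩ := hp'_surj y
    exact ⟨p t, t, rfl⟩
  · rintro a b a' b' ⟨s, hs⟩ ⟨t, ht⟩
    obtain ⟨rfl, rfl⟩ := Prod.mk.inj hs
    obtain ⟨rfl, rfl⟩ := Prod.mk.inj ht
    exact key s t
end

section
/- Let h : [0, ∞) → ℝ be a monotone nondecreasing function, let D be a bounded open subset of ℝ^d, and let u, v : D → [0, ∞) be twice continuously differentiable functions such that Δu(x) ≥ h(u(x)) and Δv(x) ≤ h(v(x)) for every x ∈ D. Suppose that for every y ∈ ∂D, limsup_{D ∋ x → y} (u(x) - v(x)) ≤ 0. Then u(x) ≤ v(x) for every x ∈ D. -/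
/-- The Laplacian `Δf = ∑_{i=1}^d ∂²f/∂x_i²` of a function on `ℝ^d`. -/
noncomputable def laplacian {d : ℕ} (f : EuclideanSpace ℝ (Fin d) → ℝ)
    (x : EuclideanSpace ℝ (Fin d)) : ℝ :=
  ∑ i : Fin d,
    fderiv ℝ (fun y => fderiv ℝ f y (EuclideanSpace.single i 1)) x (EuclideanSpace.single i 1)

theorem second_deriv_nonpos_aux (g : ℝ → ℝ) (hmax : IsLocalMax g 0)
    (hg : ∀ᶠ t in nhds (0 : ℝ), DifferentiableAt ℝ g t)
    (hg2 : DifferentiableAt ℝ (deriv g) 0) : deriv (deriv g) 0 ≤ 0 := by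
  by_contra! hc
  set c := deriv (deriv g) 0 with hcdef
  let k : ℝ → ℝ := fun t => g t - c / 4 * t ^ 2
  have hk : ∀ᶠ t in nhds (0 : ℝ), deriv k t = deriv g t - c / 2 * t := by
    filter_upwards [hg] with t ht
    have h1 : HasDerivAt k (deriv g t - c / 4 * ((2 : ℕ) * t ^ 1)) t :=
      ht.hasDerivAt.sub (by simpa using (hasDerivAt_pow 2 t).const_mul (c / 4))
    rw [h1.deriv]; push_cast; ring
  have hk2 : deriv (deriv k) 0 = c / 2 := by
    have h1 : HasDerivAt (fun t => deriv g t - c / 2 * t) (c - c / 2 * 1) 0 :=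
      hg2.hasDerivAt.sub ((hasDerivAt_id (0 : ℝ)).const_mul (c / 2))
    rw [Filter.EventuallyEq.deriv_eq hk, h1.deriv]; ring
  have hk1 : deriv k 0 = 0 := by
    rw [hk.self_of_nhds, hmax.deriv_eq_zero]; ring
  have hmin : IsLocalMin k 0 := by
    apply isLocalMin_of_deriv_deriv_pos (by rw [hk2]; linarith) hk1
    exact hg.self_of_nhds.continuousAt.sub (by fun_prop)
  have hcon : ∀ᶠ t in nhds (0 : ℝ), t = 0 := by
    filter_upwards [hmin, hmax] with t h1 h2
    simp only [k] at h1
    by_contra ht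
    have : 0 < c / 4 * t ^ 2 := by positivity
    linarith
  obtain ⟨r, hr, hr'⟩ := Metric.eventually_nhds_iff.1 hcon
  have := @hr' (r / 2) (by rw [Real.dist_eq, sub_zero, abs_of_pos (by positivity)]; linarith)
  linarith

theorem second_fderiv_nonpos_aux {E : Type*} [NormedAddCommGroup E] [NormedSpace ℝ E]
    (f : E → ℝ) (x e : E) (hf : ContDiffAt ℝ 2 f x) (hmax : IsLocalMax f x) :
    fderiv ℝ (fun y => fderiv ℝ f y e) x e ≤ 0 := by
  have hd1 : ∀ᶠ y in nhds x, DifferentiableAt ℝ f y := by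
    filter_upwards [hf.eventually (by simp)] with y hy
    exact hy.differentiableAt (by simp)
  have hd2 : DifferentiableAt ℝ (fun y => fderiv ℝ f y e) x := by
    have : DifferentiableAt ℝ (fderiv ℝ f) x :=
      (hf.fderiv_right (m := 1) (by norm_num)).differentiableAt (by simp)
    exact this.clm_apply (differentiableAt_const e)
  have hl : ∀ t : ℝ, HasDerivAt (fun t : ℝ => x + t • e) e t := fun t => by
    simpa using ((hasDerivAt_id t).smul_const e).const_add x
  have hlc : Filter.Tendsto (fun t : ℝ => x + t • e) (nhds 0) (nhds x) := by
    simpa using (hl 0).continuousAt.tendsto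
  have hg' : ∀ᶠ t in nhds (0 : ℝ),
      HasDerivAt (fun t : ℝ => f (x + t • e)) (fderiv ℝ f (x + t • e) e) t := by
    filter_upwards [hlc.eventually hd1] with t ht
    exact ht.hasFDerivAt.comp_hasDerivAt t (hl t)
  have hd : deriv (fun t : ℝ => f (x + t • e)) =ᶠ[nhds 0]
      fun t => fderiv ℝ f (x + t • e) e := hg'.mono fun t ht => ht.deriv
  have h2 : HasDerivAt (fun t : ℝ => fderiv ℝ f (x + t • e) e)
      (fderiv ℝ (fun y => fderiv ℝ f y e) x e) 0 := by
    have hd2' : HasFDerivAt (fun y => fderiv ℝ f y e) (fderiv ℝ (fun y => fderiv ℝ f y e) x)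
      (x + (0 : ℝ) • e) := by simpa using hd2.hasFDerivAt
    exact hd2'.comp_hasDerivAt 0 (hl 0)
  have h3 := h2.congr_of_eventuallyEq hd
  rw [← h3.deriv]
  apply second_deriv_nonpos_aux _ _ (hg'.mono fun t ht => ht.differentiableAt)
    h3.differentiableAt
  have := hlc.eventually hmax
  simpa [IsLocalMax, IsMaxFilter] using this

theorem second_fderiv_sum_aux {d : ℕ} (u v : EuclideanSpace ℝ (Fin d) → ℝ)
    (x e : EuclideanSpace ℝ (Fin d)) (ε : ℝ)
    (hu : ContDiffAt ℝ 2 u x) (hv : ContDiffAt ℝ 2 v x) :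
    fderiv ℝ (fun y => fderiv ℝ (fun z => u z - v z + ε * ‖z‖ ^ 2) y e) x e =
      fderiv ℝ (fun y => fderiv ℝ u y e) x e - fderiv ℝ (fun y => fderiv ℝ v y e) x e
        + 2 * ε * ‖e‖ ^ 2 := by
  have hd2 : ∀ f : EuclideanSpace ℝ (Fin d) → ℝ, ContDiffAt ℝ 2 f x →
      DifferentiableAt ℝ (fun y => fderiv ℝ f y e) x := fun f hf => by
    have : DifferentiableAt ℝ (fderiv ℝ f) x :=
      (hf.fderiv_right (m := 1) (by norm_num)).differentiableAt (by simp)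
    exact this.clm_apply (differentiableAt_const e)
  have key : (fun y => fderiv ℝ (fun z => u z - v z + ε * ‖z‖ ^ 2) y e) =ᶠ[nhds x]
      fun y => fderiv ℝ u y e - fderiv ℝ v y e + 2 * ε * inner ℝ e y := by
    filter_upwards [hu.eventually (by simp), hv.eventually (by simp)] with y h1 h2
    have h := ((h1.differentiableAt (by simp)).hasFDerivAt.sub
      (h2.differentiableAt (by simp)).hasFDerivAt).add
      (((hasStrictFDerivAt_norm_sq y).hasFDerivAt).const_mul ε)
    have h' : fderiv ℝ (fun z => u z - v z + ε * ‖z‖ ^ 2) y = _ := h.fderiv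
    rw [h']
    simp [real_inner_comm]
    ring
  rw [key.fderiv_eq]
  have h := ((hd2 u hu).hasFDerivAt.sub (hd2 v hv).hasFDerivAt).add
    (((innerSL ℝ e).hasFDerivAt (x := x)).const_mul (2 * ε))
  have h' : fderiv ℝ (fun y => fderiv ℝ u y e - fderiv ℝ v y e + 2 * ε * inner ℝ e y) x = _ :=
    h.fderiv
  rw [h']
  simp

/-- Lemma 3.13 (comparison principle): let `h : [0,∞) → ℝ` be monotone nondecreasing, `D` a
bounded domain in `ℝ^d`, and `u, v : D → [0,∞)` of class `C²` with `Δu ≥ h(u)` and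
`Δv ≤ h(v)` on `D`. If `limsup_{D ∋ x → y} (u(x) - v(x)) ≤ 0` for every `y ∈ ∂D`, then
`u ≤ v` on `D`. -/
theorem stmt16 {d : ℕ} (hd : 1 ≤ d) (h : ℝ → ℝ) (hh : MonotoneOn h (Set.Ici (0 : ℝ)))
    (D : Set (EuclideanSpace ℝ (Fin d))) (hD_open : IsOpen D)
    (hD_bdd : Bornology.IsBounded D)
    (u v : EuclideanSpace ℝ (Fin d) → ℝ)
    (hu_nonneg : ∀ x ∈ D, 0 ≤ u x) (hv_nonneg : ∀ x ∈ D, 0 ≤ v x)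
    (hu_smooth : ContDiffOn ℝ 2 u D) (hv_smooth : ContDiffOn ℝ 2 v D)
    (hu_sub : ∀ x ∈ D, h (u x) ≤ laplacian u x)
    (hv_super : ∀ x ∈ D, laplacian v x ≤ h (v x))
    (hbound : ∀ y ∈ frontier D,
      Filter.limsup (fun x => ((u x - v x : ℝ) : EReal)) (nhdsWithin y D) ≤ 0) :
    ∀ x ∈ D, u x ≤ v x := by
  intro x₀ hx₀
  by_contra! hlt
  obtain ⟨R, hR, hRD⟩ := hD_bdd.exists_pos_norm_le
  set δ := u x₀ - v x₀ with hδ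
  have hδ0 : 0 < δ := by linarith
  set ε := δ / (2 * R ^ 2) with hε
  have hε0 : 0 < ε := by positivity
  have hεR : ∀ x ∈ D, ε * ‖x‖ ^ 2 ≤ δ / 2 := fun x hx => by
    have h1 : ‖x‖ ^ 2 ≤ R ^ 2 := by have := hRD x hx; gcongr
    calc ε * ‖x‖ ^ 2 ≤ ε * R ^ 2 := by gcongr
      _ = δ / 2 := by rw [hε]; field_simp
  set w : EuclideanSpace ℝ (Fin d) → ℝ := fun z => u z - v z + ε * ‖z‖ ^ 2 with hw
  have hwc : ContinuousOn w D :=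
    (hu_smooth.continuousOn.sub hv_smooth.continuousOn).add (by fun_prop)
  let K := {x | x ∈ D ∧ δ ≤ w x}
  have hKD : K ⊆ D := fun x hx => hx.1
  have hKclosed : IsClosed K := by
    rw [← closure_subset_iff_isClosed]
    intro y hy
    have hf : ∃ᶠ x in nhds y, x ∈ K := mem_closure_iff_frequently.1 hy
    by_cases hyD : y ∈ D
    · refine ⟨hyD, ?_⟩
      by_contra! hlt'
      have := (hwc.continuousAt (hD_open.mem_nhds hyD)).eventually_lt_const hlt'
      obtain ⟨x, hx, hx'⟩ := (hf.and_eventually this).exists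
      exact absurd hx.2 (not_le.2 hx')
    · exfalso
      have hyf : y ∈ frontier D := by
        rw [hD_open.frontier_eq]
        exact ⟨closure_mono hKD hy, hyD⟩
      have h1 : Filter.limsup (fun x => ((u x - v x : ℝ) : EReal)) (nhdsWithin y D)
          < ((δ / 2 : ℝ) : EReal) :=
        (hbound y hyf).trans_lt (by exact_mod_cast half_pos hδ0)
      have h2 := Filter.eventually_lt_of_limsup_lt h1
      rw [eventually_nhdsWithin_iff] at h2
      obtain ⟨x, hx, hx'⟩ := (hf.and_eventually h2).exists
      have h3 : u x - v x < δ / 2 := by exact_mod_cast hx' hx.1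
      have h4 := hεR x hx.1
      have h5 : δ ≤ u x - v x + ε * ‖x‖ ^ 2 := hx.2
      linarith
  have hK : IsCompact K := Metric.isCompact_of_isClosed_isBounded hKclosed (hD_bdd.subset hKD)
  have hx₀K : x₀ ∈ K := ⟨hx₀, by simp only [hw]; rw [← hδ]; linarith [show 0 ≤ ε * ‖x₀‖ ^ 2 by positivity]⟩
  obtain ⟨x, hxK, hxmax⟩ := hK.exists_isMaxOn ⟨x₀, hx₀K⟩ (hwc.mono hKD)
  have hxD := hKD hxK
  have hloc : IsLocalMax w x := by
    filter_upwards [hD_open.mem_nhds hxD] with y hy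
    by_cases hyK : δ ≤ w y
    · exact hxmax (show y ∈ K from ⟨hy, hyK⟩)
    · exact (not_le.1 hyK).le.trans hxK.2
  have hu := hu_smooth.contDiffAt (hD_open.mem_nhds hxD)
  have hv := hv_smooth.contDiffAt (hD_open.mem_nhds hxD)
  have hwC : ContDiffAt ℝ 2 w x :=
    (hu.sub hv).add (contDiffAt_const.mul (contDiff_norm_sq ℝ).contDiffAt)
  have hsum : laplacian u x - laplacian v x + d * (2 * ε) ≤ 0 := by
    have h1 : ∑ i : Fin d, fderiv ℝ (fun y => fderiv ℝ w y (EuclideanSpace.single i 1)) x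
        (EuclideanSpace.single i 1) ≤ 0 :=
      Finset.sum_nonpos fun i _ => second_fderiv_nonpos_aux w x _ hwC hloc
    simp only [hw, second_fderiv_sum_aux u v x _ ε hu hv] at h1
    simpa [laplacian, Finset.sum_add_distrib, Finset.sum_sub_distrib] using h1
  have hdpos : (0 : ℝ) < d * (2 * ε) := by
    have : (0 : ℝ) < d := by exact_mod_cast hd
    positivity
  have huv : v x ≤ u x := by
    have h4 := hεR x hxD
    have h5 : δ ≤ u x - v x + ε * ‖x‖ ^ 2 := hxK.2
    linarith
  have := hh (hv_nonneg x hxD) (hu_nonneg x hxD) huv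
  linarith [hu_sub x hxD, hv_super x hxD]
end

section
/- The map sending a plane tree t to its height function (h_t(0), h_t(1), ..., h_t(#t - 1)), where h_t(n) = |u_n| is the length of the n-th vertex of t in lexicographical order, is injective: two plane trees with the same height function are equal. -/
theorem aux_lt_append (w : List ℕ) : ∀ a b : List ℕ, w ++ a < w ++ b ↔ a < b := by
  induction w with
  | nil => simp
  | cons x w ih =>
    intro a b
    simp only [List.cons_append, List.cons_lt_cons_iff, ih]
    simp

theorem aux_prefix (w : List ℕ) (j : ℕ) : ∀ p : List ℕ, w ≤ p → p < w ++ [j] →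
    ∃ r, p = w ++ r ∧ r < [j] := by
  induction w with
  | nil => intro p _ h; exact ⟨p, by simp, by simpa using h⟩
  | cons x w ih =>
    intro p h1 h2
    cases p with
    | nil => exact absurd (List.nil_lt_cons x w) (not_lt.mpr h1)
    | cons y p =>
      rw [← not_lt, List.cons_lt_cons_iff] at h1
      rw [List.cons_append, List.cons_lt_cons_iff] at h2
      push Not at h1
      obtain ⟨h3, h4⟩ := h1
      rcases h2 with h2 | ⟨rfl, h2⟩
      · omega
      · obtain ⟨r, rfl, hr⟩ := ih p (h4 rfl) h2
        exact ⟨r, rfl, hr⟩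

theorem aux_mem_prefix {t : Finset (List ℕ)} (ht : IsPlaneTree t) (r : List ℕ) :
    ∀ w : List ℕ, w ++ r ∈ t → w ∈ t := by
  induction r using List.reverseRecOn with
  | nil => intro w h; simpa using h
  | append_singleton r x ih =>
    intro w h
    apply ih
    have := ht.2.1 _ h (by simp)
    rwa [← List.append_assoc, List.dropLast_concat] at this

/-- The vertex at height `n` following `p`. -/
def nextVertex (p : List ℕ) (n : ℕ) : List ℕ :=
  p.take (n - 1) ++ [p.getD (n - 1) 0 + 1]

theorem aux_next {t : Finset (List ℕ)} (ht : IsPlaneTree t) (p v : List ℕ) (hp : p ∈ t)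
    (hv : v ∈ t) (hpv : p < v) (h : ∀ u ∈ t, u < v → u ≤ p) : v = nextVertex p v.length := by
  rcases List.eq_nil_or_concat' v with rfl | ⟨w, j, rfl⟩
  · exact absurd hpv (List.not_lt_nil p)
  · have hw : w ∈ t := aux_mem_prefix ht [j] w hv
    have hwv : w < w ++ [j] := by
      have := (aux_lt_append w [] [j]).2 (List.nil_lt_cons _ _)
      simpa using this
    obtain ⟨r, rfl, hr⟩ := aux_prefix w j p (h w hw hwv) hpv
    obtain ⟨k, hk⟩ := ht.2.2 w hw
    have hj := (hk j).1 hv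
    cases r with
    | nil =>
      have hj1 : j = 1 := by
        by_contra hne
        have h1 : w ++ [1] ∈ t := (hk 1).2 ⟨le_rfl, by omega⟩
        have h2 : w ++ [1] < w ++ [j] := by
          rw [aux_lt_append, List.cons_lt_cons_iff]; left; omega
        have h3 := h _ h1 h2
        rw [← not_lt, aux_lt_append] at h3
        exact h3 (List.nil_lt_cons _ _)
      subst hj1
      simp [nextVertex]
    | cons x r =>
      have hx : w ++ [x] ∈ t := by
        apply aux_mem_prefix ht r
        simpa using hp
      have hx1 := (hk x).1 hx
      have hxj : x < j := by
        rw [List.cons_lt_cons_iff] at hr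
        rcases hr with hr | ⟨_, hr⟩
        · exact hr
        · exact absurd hr (List.not_lt_nil r)
      have hje : j = x + 1 := by
        by_contra hne
        have h1 : w ++ [x + 1] ∈ t := (hk (x + 1)).2 ⟨by omega, by omega⟩
        have h2 : w ++ [x + 1] < w ++ [j] := by
          rw [aux_lt_append, List.cons_lt_cons_iff]; left; omega
        have h3 := h _ h1 h2
        rw [← not_lt, aux_lt_append, List.cons_lt_cons_iff] at h3
        exact h3 (Or.inl (by omega))
      subst hje
      simp [nextVertex]

theorem aux_chain {t : Finset (List ℕ)} (ht : IsPlaneTree t) :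
    (vertexList t).IsChain (fun p v => v = nextVertex p v.length) := by
  have hs : (vertexList t).Pairwise (· < ·) := (Finset.sortedLT_sort t).pairwise
  have hm : ∀ u, u ∈ vertexList t ↔ u ∈ t := fun u => Finset.mem_sort _
  rw [List.isChain_iff_getElem]
  rw [List.pairwise_iff_getElem] at hs
  intro i hi
  apply aux_next ht
  · exact (hm _).1 (List.getElem_mem _)
  · exact (hm _).1 (List.getElem_mem _)
  · exact hs _ _ _ _ (by omega)
  · intro u hu huv
    obtain ⟨k, hk, rfl⟩ := List.mem_iff_getElem.1 ((hm u).2 hu)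
    rcases lt_trichotomy k i with h | h | h
    · exact (hs _ _ _ _ h).le
    · subst h; exact le_rfl
    · exfalso
      rcases Nat.lt_or_ge (i + 1) k with h' | h'
      · exact lt_asymm huv (hs _ _ _ _ h')
      · have : k = i + 1 := by omega
        subst this
        exact lt_irrefl _ huv

theorem aux_head {t : Finset (List ℕ)} (ht : IsPlaneTree t) : ∃ l, vertexList t = [] :: l := by
  have hs : (vertexList t).Pairwise (· < ·) := (Finset.sortedLT_sort t).pairwise
  have hm : [] ∈ vertexList t := (Finset.mem_sort _).2 ht.1
  cases h : vertexList t with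
  | nil => simp [h] at hm
  | cons a l =>
    rw [h] at hs hm
    rcases List.mem_cons.1 hm with h1 | h1
    · exact ⟨l, by rw [h1]⟩
    · exact absurd ((List.pairwise_cons.1 hs).1 _ h1) (List.not_lt_nil a)

theorem aux_unique (l : List (List ℕ)) : ∀ (l' : List (List ℕ)) (a : List ℕ),
    (a :: l).IsChain (fun p v => v = nextVertex p v.length) →
    (a :: l').IsChain (fun p v => v = nextVertex p v.length) →
    l.map List.length = l'.map List.length → l = l' := by
  induction l with
  | nil => intro l' a _ _ h; simpa [eq_comm] using h
  | cons b l ih =>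
    intro l' a h1 h2 h
    cases l' with
    | nil => simp at h
    | cons c l' =>
      rw [List.isChain_cons_cons] at h1 h2
      simp only [List.map_cons, List.cons.injEq] at h
      have hbc : b = c := by rw [h1.1, h2.1, h.1]
      subst hbc
      rw [ih l' b h1.2 h2.2 h.2]

/-- The map sending a plane tree `t` to its height function
`(h_t(0), …, h_t(#t - 1))`, where `h_t(n) = |u_n|`, is injective: two plane trees with the
same height function are equal. -/
theorem stmt18 (t t' : Finset (List ℕ)) (ht : IsPlaneTree t) (ht' : IsPlaneTree t')
    (hheight : (vertexList t).map List.length = (vertexList t').map List.length) :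
    t = t' := by
  obtain ⟨l, hl⟩ := aux_head ht
  obtain ⟨l', hl'⟩ := aux_head ht'
  have h1 := aux_chain ht
  have h2 := aux_chain ht'
  rw [hl] at h1 hheight
  rw [hl'] at h2 hheight
  simp only [List.map_cons, List.cons.injEq] at hheight
  have h := aux_unique l l' [] h1 h2 hheight.2
  ext u
  have e : u ∈ vertexList t ↔ u ∈ vertexList t' := by rw [hl, hl', h]
  simpa [vertexList] using e
end
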